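/- arXiv:1805.08562 — 2 statements merged into one kernel-verified Lean document; each statement's English description precedes it below -/
import Mathlib

section
/- (Theorem 1, part 2: stochastic bound) Fix δ ∈ (0,1]. Suppose (X_t,Y_t)_{t≥1} satisfies the d-th order stochastic condition with parameter β* > 1/2, and let α_{d-1,d} = (π*_{d-1} − π*_d)/2 and α* = min{α_{d-1,d}, 2β*−1}. Then ContextTreeAdaHedge(D) run with the prior g_prop(h) = 2^{-2^{h+1}} satisfies, with probability at least 1−δ, R_{T,d} = O( 2^{2d} ( (d²/α²_{d-1,d}) ln(d/(α²_{d-1,d} δ)) + (D·d/(α*)²) ln(D/(α* δ)) ) ). -/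
open Finset MeasureTheory

noncomputable section

namespace CTAH

/-- Truncation of a context in `{0,1}^D` to its sub-context of length `h`
(the "last `h` coordinates", reindexed as the first `h` coordinates). -/
def trunc {D : ℕ} (h : ℕ) (x : Fin D → Bool) : Fin h → Bool :=
  fun i => if hi : (i : ℕ) < D then x ⟨i, hi⟩ else false

/-- The order of a tree expert `f ∈ F_D`: the least `e` such that `f`
factors through the length-`e` sub-context. -/
def order {D : ℕ} (f : (Fin D → Bool) → Bool) : ℕ :=
  sInf {e | ∃ f' : (Fin e → Bool) → Bool, ∀ x : Fin D → Bool, f x = f' (trunc e x)}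

variable {D : ℕ}

/-- Cumulative 0-1 loss `L_{t,f}` of an order-`h` class tree expert through round `t`. -/
def Lexp (X : ℕ → Fin D → Bool) (Y : ℕ → Bool) (h : ℕ)
    (f : (Fin h → Bool) → Bool) (t : ℕ) : ℝ :=
  ∑ s ∈ Finset.Icc 1 t, if Y s ≠ f (trunc h (X s)) then 1 else 0

/-- Loss `L*_{t,d}` of the best `d`-th order tree expert in hindsight. -/
def Lstar (X : ℕ → Fin D → Bool) (Y : ℕ → Bool) (d t : ℕ) : ℝ :=
  ⨅ f : (Fin d → Bool) → Bool, Lexp X Y d f t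

/-- Unnormalized prior weight put on a tree expert by the prior function `g`:
`∑_{h = order f}^{D} g h`. -/
def pri (D : ℕ) (g : ℕ → ℝ) (f : (Fin D → Bool) → Bool) : ℝ :=
  ∑ h ∈ Finset.Icc (order f) D, g h

/-- Normalizing factor `Z(g) = ∑_{h=0}^{D} 2^{2^h} g(h)`. -/
def Zfun (D : ℕ) (g : ℕ → ℝ) : ℝ :=
  ∑ h ∈ Finset.range (D + 1), 2 ^ 2 ^ h * g h

/-- Loss vector entry at round `t` for predicting `y`. -/
def lossv (Y : ℕ → Bool) (t : ℕ) (y : Bool) : ℝ := if Y t ≠ y then 1 else 0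

/-- Prediction distribution on `{0,1}` induced by the exponential-weights
distribution over tree experts with prior `g` and learning rate `η`. -/
def wpred (g : ℕ → ℝ) (X : ℕ → Fin D → Bool) (Y : ℕ → Bool)
    (η : ℝ) (t : ℕ) (y : Bool) : ℝ :=
  (∑ f : (Fin D → Bool) → Bool,
      if f (X t) = y then pri D g f * Real.exp (-η * Lexp X Y D f t) else 0) /
  (∑ f : (Fin D → Bool) → Bool, pri D g f * Real.exp (-η * Lexp X Y D f t))

/-- Expected loss `⟨w_t, l_t⟩` of the algorithm at round `t`. -/
def algLoss (g : ℕ → ℝ) (X : ℕ → Fin D → Bool) (Y : ℕ → Bool) (η : ℝ) (t : ℕ) : ℝ :=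
  ∑ y : Bool, wpred g X Y η t y * lossv Y t y

/-- Mixability gap at round `t` for learning rate `η`:
`⟨w_t,l_t⟩ + (1/η) ln ⟨w_t, e^{-η l_t}⟩`. -/
def mixgap (g : ℕ → ℝ) (X : ℕ → Fin D → Bool) (Y : ℕ → Bool) (η : ℝ) (t : ℕ) : ℝ :=
  algLoss g X Y η t +
    (1 / η) * Real.log (∑ y : Bool, wpred g X Y η t y * Real.exp (-η * lossv Y t y))

/-- Cumulative mixability gap `Δ_t` of AdaHedge, defined recursively together with
the AdaHedge learning rate `η_t = (ln 2)/Δ_{t-1}`. -/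
def Delta (g : ℕ → ℝ) (X : ℕ → Fin D → Bool) (Y : ℕ → Bool) : ℕ → ℝ
  | 0 => 0
  | t + 1 => Delta g X Y t + mixgap g X Y (Real.log 2 / Delta g X Y t) (t + 1)

/-- The AdaHedge learning rate `η_t = (ln 2)/Δ_{t-1}`. -/
def eta (g : ℕ → ℝ) (X : ℕ → Fin D → Bool) (Y : ℕ → Bool) (t : ℕ) : ℝ :=
  Real.log 2 / Delta g X Y (t - 1)

/-- The mixability gap `δ_t` at round `t`, at the AdaHedge learning rate. -/
def delta (g : ℕ → ℝ) (X : ℕ → Fin D → Bool) (Y : ℕ → Bool) (t : ℕ) : ℝ :=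
  mixgap g X Y (eta g X Y t) t

/-- Variance `v_t = Var_{K ~ w_t}[l_{t,K}]` of the algorithm's loss at round `t`. -/
def varLoss (g : ℕ → ℝ) (X : ℕ → Fin D → Bool) (Y : ℕ → Bool) (η : ℝ) (t : ℕ) : ℝ :=
  ∑ y : Bool, wpred g X Y η t y * (lossv Y t y - algLoss g X Y η t) ^ 2

/-- Cumulative variance `V_{T₀}^{T} = ∑_{t=T₀}^{T} v_t`. -/
def Vwin (g : ℕ → ℝ) (X : ℕ → Fin D → Bool) (Y : ℕ → Bool) (T₀ T : ℕ) : ℝ :=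
  ∑ t ∈ Finset.Icc T₀ T, varLoss g X Y (eta g X Y t) t

/-- Cumulative mixability gap `Δ_{T₀}^{T} = ∑_{t=T₀}^{T} δ_t`. -/
def Dwin (g : ℕ → ℝ) (X : ℕ → Fin D → Bool) (Y : ℕ → Bool) (T₀ T : ℕ) : ℝ :=
  ∑ t ∈ Finset.Icc T₀ T, delta g X Y t

/-- Expected regret `R_{T,d}` of ContextTreeAdaHedge(D) with prior `g` with respect to
the best `d`-th order tree expert. -/
def regret (g : ℕ → ℝ) (X : ℕ → Fin D → Bool) (Y : ℕ → Bool) (d T : ℕ) : ℝ :=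
  (∑ t ∈ Finset.Icc 1 T, algLoss g X Y (eta g X Y t) t) - Lstar X Y d T

/-- The model-order-proportional prior function `g_prop(h) = 2^{-2^{h+1}}`. -/
def gprop (h : ℕ) : ℝ := (2 : ℝ) ^ (-(2 : ℤ) ^ (h + 1))


/-- Joint probability that the length-`h` sub-context equals `xh` and the label equals
`y`, under the `d`-th order stochastic model `(Q, P*)`. -/
def jointP {D : ℕ} (d : ℕ) (Q : (Fin D → Bool) → ℝ) (Pc : (Fin d → Bool) → Bool → ℝ)
    (h : ℕ) (xh : Fin h → Bool) (y : Bool) : ℝ :=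
  ∑ x : Fin D → Bool, if trunc h x = xh then Q x * Pc (trunc d x) y else 0

/-- Asymptotic unpredictability under the `h`-th order predictive model:
`π*_h = ∑_{x(h)} Q*_h(x(h)) (1 − max_y P*(y | x(h)))`
(equivalently `∑_{x(h)} min_y Pr[X(h) = x(h), Y ≠ y]`). -/
def pistar {D : ℕ} (d : ℕ) (Q : (Fin D → Bool) → ℝ) (Pc : (Fin d → Bool) → Bool → ℝ)
    (h : ℕ) : ℝ :=
  ∑ xh : Fin h → Bool, min (jointP d Q Pc h xh false) (jointP d Q Pc h xh true)

/-!
The potential argument with the mix loss bounds the regret by `1 + 2 ^ (d + 1)` times the total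
mixability gap `Δ_T`, the factor `2 ^ (d + 1)` being `-log₂ (g_prop d)`. A mixability gap is at most
the learning rate `ln 2 / Δ_{t-1}` times the variance of the loss, so `Δ_t²` increases in each round
by at most a multiple of the weight put on the label that the best expert `f*` does not predict.

That weight splits over the levels `h`. The levels below `d` hold experts of order at most `d - 1`,
which fall behind `f*` linearly in `t`. At a level `h ≥ d`, flipping the prediction at the current
node compares the experts that disagree with `f*` there with those that agree; the ratio decays
exponentially in the number of visits to that node, at a rate `c` proportional to `α* / Δ_T`. Summed
over time this costs `2 ^ h / c`, which the prior, giving level `h` a share of order `2 ^ (d - h)`,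
turns into `2 ^ d / c`. Thus `Δ_T²` is at most about `2 ^ d * D * Δ_T / α*` plus the cost of the
random fluctuations, and solving for `Δ_T` gives the rate.

The linear drifts hold at all times simultaneously with probability `1 - δ`, by Doob's maximal
inequality for products of independent factors and a union bound over nodes and experts.
-/

section MixabilityGap

/-- The mixability gap at learning rate `η` of a prediction that incurs loss `1` with probability
`p` and loss `0` otherwise. At `η = 0` the junk value `1 / 0 = 0` turns it into `p`. -/
def bernoulliMixGap (p η : ℝ) : ℝ :=
  p + (1 / η) * Real.log (1 - p + p * Real.exp (-η))

variable {p η : ℝ}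

lemma exp_mul_le_bernoulli (hp : 0 ≤ p) (hp' : p ≤ 1) :
    Real.exp (η * p) ≤ 1 - p + p * Real.exp η := by
  have h := convexOn_exp.2 (Set.mem_univ 0) (Set.mem_univ η) (sub_nonneg.2 hp') hp (by ring)
  simpa [mul_comm p η] using h

lemma bernoulli_exp_pos (hp : 0 ≤ p) (hp' : p ≤ 1) : 0 < 1 - p + p * Real.exp η :=
  (Real.exp_pos _).trans_le (exp_mul_le_bernoulli hp hp')

lemma mul_le_log_bernoulli (hp : 0 ≤ p) (hp' : p ≤ 1) :
    η * p ≤ Real.log (1 - p + p * Real.exp η) :=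
  (Real.le_log_iff_exp_le (bernoulli_exp_pos hp hp')).2 (exp_mul_le_bernoulli hp hp')

lemma bernoulliMixGap_nonneg (hp : 0 ≤ p) (hp' : p ≤ 1) (hη : 0 ≤ η) :
    0 ≤ bernoulliMixGap p η := by
  rcases hη.eq_or_lt with rfl | hη
  · simpa [bernoulliMixGap] using hp
  have hlog := mul_le_mul_of_nonneg_left (mul_le_log_bernoulli (η := -η) hp hp')
    (one_div_nonneg.2 hη.le)
  have hcancel : 1 / η * (-η * p) = -p := by field_simp
  unfold bernoulliMixGap
  linarith

lemma bernoulliMixGap_le_self (hp : 0 ≤ p) (hp' : p ≤ 1) (hη : 0 ≤ η) :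
    bernoulliMixGap p η ≤ p := by
  have hexp : Real.exp (-η) ≤ 1 := Real.exp_le_one_iff.2 (by linarith)
  have hlog : Real.log (1 - p + p * Real.exp (-η)) ≤ 0 :=
    Real.log_nonpos (bernoulli_exp_pos hp hp').le (by nlinarith)
  have := mul_nonpos_of_nonneg_of_nonpos (one_div_nonneg.2 hη) hlog
  unfold bernoulliMixGap
  linarith

lemma exp_le_one_add_add_sq {x : ℝ} (hx : |x| ≤ 1) : Real.exp x ≤ 1 + x + x ^ 2 := by
  linarith [(abs_le.1 (Real.abs_exp_sub_one_sub_id_le hx)).2]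

-- Centring the loss at its mean `p` removes the linear term of the exponential.
lemma log_bernoulli_neg_le (hp : 0 ≤ p) (hp' : p ≤ 1) (hη : 0 ≤ η) (hη' : η ≤ 1) :
    Real.log (1 - p + p * Real.exp (-η)) ≤ -(η * p) + η ^ 2 * (p * (1 - p)) := by
  have hcentre : 1 - p + p * Real.exp (-η) = Real.exp (-(η * p)) *
      ((1 - p) * Real.exp (η * p) + p * Real.exp (-(η * (1 - p)))) := by
    have h₁ : Real.exp (-(η * p)) * Real.exp (η * p) = 1 := by simp [← Real.exp_add]
    have h₂ : Real.exp (-(η * p)) * Real.exp (-(η * (1 - p))) = Real.exp (-η) := by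
      rw [← Real.exp_add]; ring_nf
    linear_combination -(1 - p) * h₁ - p * h₂
  have hquad₁ := exp_le_one_add_add_sq (x := η * p) (abs_le.2 ⟨by nlinarith, by nlinarith⟩)
  have hquad₂ := exp_le_one_add_add_sq (x := -(η * (1 - p)))
    (abs_le.2 ⟨by nlinarith, by nlinarith⟩)
  have hmix : (1 - p) * Real.exp (η * p) + p * Real.exp (-(η * (1 - p))) ≤
      1 + η ^ 2 * (p * (1 - p)) := by
    calc _ ≤ (1 - p) * (1 + η * p + (η * p) ^ 2) +
          p * (1 + -(η * (1 - p)) + (-(η * (1 - p))) ^ 2) := by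
          gcongr
      _ = 1 + η ^ 2 * (p * (1 - p)) := by ring
  rw [Real.log_le_iff_le_exp (bernoulli_exp_pos hp hp'), hcentre, Real.exp_add]
  gcongr
  exact hmix.trans (by linarith [Real.add_one_le_exp (η ^ 2 * (p * (1 - p)))])

lemma bernoulliMixGap_le_variance (hp : 0 ≤ p) (hp' : p ≤ 1) (hη : 0 < η) (hη' : η ≤ 1) :
    bernoulliMixGap p η ≤ η * (p * (1 - p)) := by
  have hlog := mul_le_mul_of_nonneg_left (log_bernoulli_neg_le hp hp' hη.le hη')
    (one_div_nonneg.2 hη.le)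
  have hcancel : 1 / η * (-(η * p) + η ^ 2 * (p * (1 - p))) = -p + η * (p * (1 - p)) := by
    field_simp
  unfold bernoulliMixGap
  linarith

end MixabilityGap

section Truncation

lemma trunc_self (x : Fin D → Bool) : trunc D x = x := by
  funext i
  simp [trunc]

lemma trunc_trunc {e h : ℕ} (heh : e ≤ h) (x : Fin D → Bool) :
    trunc e (trunc h x) = trunc e x := by
  funext i
  simp [trunc, i.2.trans_le heh]

lemma trunc_surjective {h : ℕ} (hD : h ≤ D) :
    Function.Surjective (trunc h : (Fin D → Bool) → Fin h → Bool) :=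
  fun z => ⟨trunc D z, by rw [trunc_trunc hD, trunc_self]⟩

lemma order_le_iff {h : ℕ} (f : (Fin D → Bool) → Bool) :
    order f ≤ h ↔ ∃ f' : (Fin h → Bool) → Bool, (fun x => f' (trunc h x)) = f := by
  constructor
  · intro hle
    have hne : {e | ∃ f' : (Fin e → Bool) → Bool, ∀ x : Fin D → Bool,
        f x = f' (trunc e x)}.Nonempty := ⟨D, f, fun x => by rw [trunc_self]⟩
    obtain ⟨f', hf'⟩ := Nat.sInf_mem hne
    refine ⟨fun z => f' (trunc _ z), funext fun x => ?_⟩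
    rw [hf' x]
    exact congrArg f' (trunc_trunc hle x)
  · rintro ⟨f', rfl⟩
    exact Nat.sInf_le ⟨f', fun x => rfl⟩

lemma order_le (f : (Fin D → Bool) → Bool) : order f ≤ D :=
  (order_le_iff f).2 ⟨f, by simp only [trunc_self]⟩

lemma sum_order_le {h : ℕ} (hD : h ≤ D) (F : ((Fin D → Bool) → Bool) → ℝ) :
    ∑ f with order f ≤ h, F f = ∑ f' : (Fin h → Bool) → Bool, F fun x => f' (trunc h x) := by
  have himage : univ.filter (fun f : (Fin D → Bool) → Bool => order f ≤ h) =
      univ.image fun (f' : (Fin h → Bool) → Bool) x => f' (trunc h x) := by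
    ext f
    simp [order_le_iff]
  rw [himage, sum_image fun a _ b _ hab => ?_]
  exact (trunc_surjective hD).injective_comp_right hab

end Truncation

section Prior

variable {g : ℕ → ℝ}

lemma sum_pri_mul (g : ℕ → ℝ) (F : ((Fin D → Bool) → Bool) → ℝ) :
    ∑ f, pri D g f * F f =
      ∑ h ∈ range (D + 1), g h * ∑ f' : (Fin h → Bool) → Bool, F fun x => f' (trunc h x) := by
  have hpri (f : (Fin D → Bool) → Bool) :
      pri D g f * F f = ∑ h ∈ range (D + 1), if order f ≤ h then g h * F f else 0 := by
    rw [pri, sum_mul, ← sum_filter]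
    refine sum_congr ?_ fun _ _ => rfl
    ext h
    simp only [mem_Icc, mem_filter, mem_range]
    omega
  simp_rw [hpri]
  rw [sum_comm]
  refine sum_congr rfl fun h hh => ?_
  rw [← sum_filter, ← mul_sum, sum_order_le (Nat.lt_succ_iff.1 (mem_range.1 hh))]

lemma sum_pri (D : ℕ) (g : ℕ → ℝ) : ∑ f, pri D g f = Zfun D g := by
  simpa [Zfun, mul_comm] using sum_pri_mul (D := D) g fun _ => 1

lemma le_pri (hg : ∀ h, 0 < g h) {h : ℕ} (hD : h ≤ D) {f : (Fin D → Bool) → Bool}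
    (hf : order f ≤ h) : g h ≤ pri D g f :=
  single_le_sum (f := g) (fun i _ => (hg i).le) (mem_Icc.2 ⟨hf, hD⟩)

lemma pri_pos (hg : ∀ h, 0 < g h) (f : (Fin D → Bool) → Bool) : 0 < pri D g f :=
  (hg D).trans_le (le_pri hg le_rfl (order_le f))

lemma gprop_eq (h : ℕ) : gprop h = (1 / 4 : ℝ) ^ 2 ^ h := by
  have hexp : (2 : ℤ) ^ (h + 1) = ((2 * 2 ^ h : ℕ) : ℤ) := by push_cast; ring
  rw [gprop, hexp, zpow_neg, zpow_natCast, pow_mul, ← inv_pow]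
  norm_num

lemma gprop_pos (h : ℕ) : 0 < gprop h := by
  rw [gprop_eq]
  positivity

lemma log_gprop (h : ℕ) : Real.log (gprop h) = -(2 ^ (h + 1) * Real.log 2) := by
  rw [gprop, Real.log_zpow]
  push_cast
  ring

lemma two_pow_two_pow_mul_gprop_le (h : ℕ) : 2 ^ 2 ^ h * gprop h ≤ (1 / 2 : ℝ) ^ (h + 1) := by
  calc 2 ^ 2 ^ h * gprop h = (1 / 2 : ℝ) ^ 2 ^ h := by
        rw [gprop_eq, ← mul_pow]
        norm_num
    _ ≤ (1 / 2) ^ (h + 1) :=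
      pow_le_pow_of_le_one (by norm_num) (by norm_num) Nat.lt_two_pow_self

lemma Zfun_gprop_le_one (D : ℕ) : Zfun D gprop ≤ 1 := by
  calc Zfun D gprop ≤ ∑ h ∈ range (D + 1), (1 / 2 : ℝ) ^ (h + 1) :=
        sum_le_sum fun h _ => two_pow_two_pow_mul_gprop_le h
    _ = 1 / 2 * ∑ h ∈ range (D + 1), (1 / 2 : ℝ) ^ h := by
        rw [mul_sum]
        exact sum_congr rfl fun h _ => pow_succ' _ _
    _ ≤ 1 := by linarith [sum_geometric_two_le (D + 1)]

end Prior

section ExpertLoss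

variable {h : ℕ} (X : ℕ → Fin D → Bool) (Y : ℕ → Bool)

lemma Lexp_comp_trunc {e : ℕ} (heh : h ≤ e) (f : (Fin h → Bool) → Bool) (t : ℕ) :
    Lexp X Y e (fun z => f (trunc h z)) t = Lexp X Y h f t := by
  simp only [Lexp, trunc_trunc heh]

lemma Lexp_comp_trunc_full (f : (Fin h → Bool) → Bool) (t : ℕ) :
    Lexp X Y D (fun x => f (trunc h x)) t = Lexp X Y h f t := by
  simp only [Lexp, trunc_self]

lemma Lexp_nonneg (f : (Fin h → Bool) → Bool) (t : ℕ) : 0 ≤ Lexp X Y h f t :=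
  sum_nonneg fun _ _ => by split_ifs <;> norm_num

lemma Lexp_succ (f : (Fin h → Bool) → Bool) (t : ℕ) :
    Lexp X Y h f (t + 1) =
      Lexp X Y h f t + if Y (t + 1) ≠ f (trunc h (X (t + 1))) then 1 else 0 :=
  sum_Icc_succ_top (by omega) _

end ExpertLoss

section ExponentialWeights

variable {ι : Type*} [Fintype ι] {π L : ι → ℝ} {η : ℝ}

/-- The partition function of the exponential weights on experts `i` with prior weight `π i` and
cumulative loss `L i`, at learning rate `η`. -/
def expWeightSum (π L : ι → ℝ) (η : ℝ) : ℝ := ∑ i, π i * Real.exp (-η * L i)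

/-- The mix loss `-(1/η) ln ∑ᵢ πᵢ e^{-η Lᵢ}`, the potential of the exponential weights
algorithm. -/
def mixLoss (π L : ι → ℝ) (η : ℝ) : ℝ := -(1 / η) * Real.log (expWeightSum π L η)

lemma expWeightSum_pos [Nonempty ι] (hπ : ∀ i, 0 < π i) : 0 < expWeightSum π L η :=
  sum_pos (fun i _ => mul_pos (hπ i) (Real.exp_pos _)) univ_nonempty

lemma expWeightSum_le_one (hπ : ∀ i, 0 < π i) (hπ' : ∑ i, π i ≤ 1) (hL : ∀ i, 0 ≤ L i)
    (hη : 0 ≤ η) : expWeightSum π L η ≤ 1 := by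
  refine (sum_le_sum fun i _ => ?_).trans hπ'
  refine mul_le_of_le_one_right (hπ i).le (Real.exp_le_one_iff.2 ?_)
  linarith [mul_nonneg hη (hL i)]

lemma mixLoss_nonneg [Nonempty ι] (hπ : ∀ i, 0 < π i) (hπ' : ∑ i, π i ≤ 1) (hL : ∀ i, 0 ≤ L i)
    (hη : 0 ≤ η) : 0 ≤ mixLoss π L η :=
  mul_nonneg_of_nonpos_of_nonpos (neg_nonpos.2 (one_div_nonneg.2 hη))
    (Real.log_nonpos (expWeightSum_pos hπ).le (expWeightSum_le_one hπ hπ' hL hη))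

lemma mixLoss_le (hπ : ∀ i, 0 < π i) (hη : 0 < η) (i : ι) :
    mixLoss π L η ≤ L i + 1 / η * -Real.log (π i) := by
  have hterm : π i * Real.exp (-η * L i) ≤ expWeightSum π L η :=
    single_le_sum (f := fun i => π i * Real.exp (-η * L i))
      (fun j _ => (mul_pos (hπ j) (Real.exp_pos _)).le) (mem_univ i)
  have hlog := Real.log_le_log (mul_pos (hπ i) (Real.exp_pos _)) hterm
  rw [Real.log_mul (hπ i).ne' (Real.exp_pos _).ne', Real.log_exp] at hlog
  have hscaled := mul_le_mul_of_nonneg_left hlog (one_div_nonneg.2 hη.le)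
  have hcancel : 1 / η * (Real.log (π i) + -η * L i) = 1 / η * Real.log (π i) - L i := by
    field_simp
    ring
  unfold mixLoss
  linarith

-- Jensen for `x ↦ x ^ (η / η')` under the normalised prior.
lemma mul_log_expWeightSum_le [Nonempty ι] (hπ : ∀ i, 0 < π i) (hπ' : ∑ i, π i ≤ 1) {η' : ℝ}
    (hη' : 0 < η') (hle : η' ≤ η) :
    η / η' * Real.log (expWeightSum π L η') ≤ Real.log (expWeightSum π L η) := by
  set P := ∑ i, π i
  have hPpos : 0 < P := sum_pos (fun i _ => hπ i) univ_nonempty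
  have hratio : 1 ≤ η / η' := (one_le_div hη').2 hle
  have hlow : ∑ i, π i / P * Real.exp (-η' * L i) = expWeightSum π L η' / P := by
    rw [expWeightSum, sum_div]
    exact sum_congr rfl fun i _ => by ring
  have hhigh : ∑ i, π i / P * Real.exp (-η' * L i) ^ (η / η') = expWeightSum π L η / P := by
    rw [expWeightSum, sum_div]
    refine sum_congr rfl fun i _ => ?_
    rw [← Real.exp_mul, show -η' * L i * (η / η') = -η * L i by field_simp]
    ring
  have hjensen := Real.rpow_arith_mean_le_arith_mean_rpow univ (fun i => π i / P)
    (fun i => Real.exp (-η' * L i)) (fun i _ => (div_pos (hπ i) hPpos).le)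
    (by rw [← sum_div]; exact div_self hPpos.ne') (fun i _ => (Real.exp_pos _).le) hratio
  rw [hlow, hhigh] at hjensen
  have hη'pos := expWeightSum_pos (L := L) (η := η') hπ
  have hlog := Real.log_le_log (Real.rpow_pos_of_pos (div_pos hη'pos hPpos) _) hjensen
  rw [Real.log_rpow (div_pos hη'pos hPpos), Real.log_div hη'pos.ne' hPpos.ne',
    Real.log_div (expWeightSum_pos hπ).ne' hPpos.ne'] at hlog
  nlinarith [Real.log_nonpos hPpos.le hπ']

lemma mixLoss_antitone [Nonempty ι] (hπ : ∀ i, 0 < π i) (hπ' : ∑ i, π i ≤ 1) {η' : ℝ}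
    (hη' : 0 < η') (hle : η' ≤ η) : mixLoss π L η ≤ mixLoss π L η' := by
  have hη : 0 < η := hη'.trans_le hle
  have hscaled := mul_le_mul_of_nonneg_left (mul_log_expWeightSum_le (L := L) hπ hπ' hη' hle)
    (one_div_nonneg.2 hη.le)
  have hcancel : 1 / η * (η / η' * Real.log (expWeightSum π L η')) =
      1 / η' * Real.log (expWeightSum π L η') := by field_simp
  unfold mixLoss
  linarith

end ExponentialWeights

section Predictions

variable {g : ℕ → ℝ} {X : ℕ → Fin D → Bool} {Y : ℕ → Bool}

/-- The partition function of the exponential weights on the `D`-th order tree experts after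
round `t`. -/
def partitionFn (g : ℕ → ℝ) (X : ℕ → Fin D → Bool) (Y : ℕ → Bool) (η : ℝ) (t : ℕ) : ℝ :=
  expWeightSum (pri D g) (fun f => Lexp X Y D f t) η

lemma partitionFn_pos (hg : ∀ h, 0 < g h) (η : ℝ) (t : ℕ) : 0 < partitionFn g X Y η t :=
  expWeightSum_pos (pri_pos hg)

lemma partitionFn_mul_wpred (hg : ∀ h, 0 < g h) (η : ℝ) (t : ℕ) (y : Bool) :
    partitionFn g X Y η t * wpred g X Y η t y =
      ∑ f : (Fin D → Bool) → Bool,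
        if f (X t) = y then pri D g f * Real.exp (-η * Lexp X Y D f t) else 0 :=
  mul_div_cancel₀ _ (partitionFn_pos hg η t).ne'

lemma wpred_pos (hg : ∀ h, 0 < g h) (η : ℝ) (t : ℕ) (y : Bool) : 0 < wpred g X Y η t y := by
  have hweight (f : (Fin D → Bool) → Bool) : 0 < pri D g f * Real.exp (-η * Lexp X Y D f t) :=
    mul_pos (pri_pos hg f) (Real.exp_pos _)
  refine div_pos (sum_pos' (fun f _ => ?_) ⟨fun _ => y, mem_univ _, ?_⟩) (partitionFn_pos hg η t)
  · split_ifs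
    exacts [(hweight f).le, le_rfl]
  · simpa only [if_true] using hweight fun _ => y

lemma wpred_add_wpred_not (hg : ∀ h, 0 < g h) (η : ℝ) (t : ℕ) (y : Bool) :
    wpred g X Y η t y + wpred g X Y η t (!y) = 1 := by
  refine mul_left_cancel₀ (partitionFn_pos (X := X) (Y := Y) hg η t).ne' ?_
  rw [mul_add, partitionFn_mul_wpred hg, partitionFn_mul_wpred hg, ← sum_add_distrib, mul_one]
  refine sum_congr rfl fun f _ => ?_
  cases f (X t) <;> cases y <;> simp

lemma algLoss_eq_wpred (η : ℝ) (t : ℕ) : algLoss g X Y η t = wpred g X Y η t (!Y t) := by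
  unfold algLoss lossv
  cases Y t <;> simp

lemma one_sub_algLoss (hg : ∀ h, 0 < g h) (η : ℝ) (t : ℕ) :
    1 - algLoss g X Y η t = wpred g X Y η t (Y t) := by
  rw [algLoss_eq_wpred]
  linarith [wpred_add_wpred_not (X := X) (Y := Y) hg η t (Y t)]

lemma algLoss_pos (hg : ∀ h, 0 < g h) (η : ℝ) (t : ℕ) : 0 < algLoss g X Y η t := by
  rw [algLoss_eq_wpred]
  exact wpred_pos hg η t _

lemma algLoss_le_one (hg : ∀ h, 0 < g h) (η : ℝ) (t : ℕ) : algLoss g X Y η t ≤ 1 := by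
  linarith [one_sub_algLoss (X := X) (Y := Y) hg η t, wpred_pos (X := X) (Y := Y) hg η t (Y t)]

lemma mixgap_eq_bernoulliMixGap (hg : ∀ h, 0 < g h) (η : ℝ) (t : ℕ) :
    mixgap g X Y η t = bernoulliMixGap (algLoss g X Y η t) η := by
  rw [mixgap, bernoulliMixGap, one_sub_algLoss hg, algLoss_eq_wpred]
  congr 3
  unfold lossv
  cases Y t <;> simp [add_comm]

lemma mixgap_nonneg (hg : ∀ h, 0 < g h) {η : ℝ} (hη : 0 ≤ η) (t : ℕ) : 0 ≤ mixgap g X Y η t := by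
  rw [mixgap_eq_bernoulliMixGap hg]
  exact bernoulliMixGap_nonneg (algLoss_pos hg η t).le (algLoss_le_one hg η t) hη

lemma mixgap_le_one (hg : ∀ h, 0 < g h) {η : ℝ} (hη : 0 ≤ η) (t : ℕ) : mixgap g X Y η t ≤ 1 := by
  rw [mixgap_eq_bernoulliMixGap hg]
  exact (bernoulliMixGap_le_self (algLoss_pos hg η t).le (algLoss_le_one hg η t) hη).trans
    (algLoss_le_one hg η t)

lemma mixgap_le_mul_wpred (hg : ∀ h, 0 < g h) {η : ℝ} (hη : 0 < η) (hη' : η ≤ 1) (t : ℕ)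
    (y : Bool) : mixgap g X Y η t ≤ η * wpred g X Y η t y := by
  have hpos := algLoss_pos (X := X) (Y := Y) hg η t
  have hle := algLoss_le_one (X := X) (Y := Y) hg η t
  rw [mixgap_eq_bernoulliMixGap hg]
  refine (bernoulliMixGap_le_variance hpos.le hle hη hη').trans
    (mul_le_mul_of_nonneg_left ?_ hη.le)
  rcases Bool.eq_or_eq_not y (Y t) with rfl | rfl
  · rw [← one_sub_algLoss hg]
    nlinarith
  · rw [← algLoss_eq_wpred]
    nlinarith

lemma partitionFn_eq_succ_mul (hg : ∀ h, 0 < g h) (η : ℝ) (t : ℕ) :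
    partitionFn g X Y η t = partitionFn g X Y η (t + 1) *
      (1 - algLoss g X Y η (t + 1) + algLoss g X Y η (t + 1) * Real.exp η) := by
  rw [one_sub_algLoss hg, algLoss_eq_wpred, mul_add, ← mul_assoc, partitionFn_mul_wpred hg,
    partitionFn_mul_wpred hg, sum_mul, ← sum_add_distrib]
  refine sum_congr rfl fun f _ => ?_
  rw [Lexp_succ, trunc_self]
  rcases Bool.eq_or_eq_not (f (X (t + 1))) (Y (t + 1)) with hf | hf
  · simp [hf]
  · have hne : Y (t + 1) ≠ !Y (t + 1) := by simp
    rw [hf, if_neg hne.symm, if_pos rfl, if_pos hne, mul_assoc, ← Real.exp_add]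
    ring_nf

-- `wpred` at round `t + 1` weighs the experts by their losses up to and including that round,
-- so the loss itself (and not only its mix version) is bounded by the increment.
lemma algLoss_le_mixLoss_sub (hg : ∀ h, 0 < g h) {η : ℝ} (hη : 0 < η) (t : ℕ) :
    algLoss g X Y η (t + 1) ≤ mixLoss (pri D g) (fun f => Lexp X Y D f (t + 1)) η -
      mixLoss (pri D g) (fun f => Lexp X Y D f t) η := by
  have hpos := (algLoss_pos (X := X) (Y := Y) hg η (t + 1)).le
  have hle := algLoss_le_one (X := X) (Y := Y) hg η (t + 1)
  have hlog : η * algLoss g X Y η (t + 1) ≤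
      Real.log (partitionFn g X Y η t) - Real.log (partitionFn g X Y η (t + 1)) := by
    rw [partitionFn_eq_succ_mul hg η t,
      Real.log_mul (partitionFn_pos hg _ _).ne' (bernoulli_exp_pos hpos hle).ne']
    linarith [mul_le_log_bernoulli (η := η) hpos hle]
  have hscaled := mul_le_mul_of_nonneg_left hlog (one_div_nonneg.2 hη.le)
  have hcancel : 1 / η * (η * algLoss g X Y η (t + 1)) = algLoss g X Y η (t + 1) := by field_simp
  unfold mixLoss
  unfold partitionFn at hscaled
  linarith

end Predictions

section AdaHedge

variable {g : ℕ → ℝ} {X : ℕ → Fin D → Bool} {Y : ℕ → Bool}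

lemma Delta_nonneg (hg : ∀ h, 0 < g h) (t : ℕ) : 0 ≤ Delta g X Y t := by
  induction t with
  | zero => exact le_rfl
  | succ t ih =>
    exact add_nonneg ih (mixgap_nonneg hg (div_nonneg (Real.log_nonneg one_le_two) ih) _)

lemma eta_nonneg (hg : ∀ h, 0 < g h) (t : ℕ) : 0 ≤ eta g X Y t :=
  div_nonneg (Real.log_nonneg one_le_two) (Delta_nonneg hg _)

lemma Delta_succ (t : ℕ) :
    Delta g X Y (t + 1) = Delta g X Y t + mixgap g X Y (eta g X Y (t + 1)) (t + 1) := rfl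

lemma Delta_monotone (hg : ∀ h, 0 < g h) : Monotone (Delta g X Y) :=
  monotone_nat_of_le_succ fun t =>
    le_add_of_nonneg_right (mixgap_nonneg hg (eta_nonneg hg (t + 1)) _)

-- At `t = 1` the learning rate is the junk value `ln 2 / 0 = 0`, where `mixgap` is `algLoss`.
lemma Delta_one (hg : ∀ h, 0 < g h) : Delta g X Y 1 = algLoss g X Y (eta g X Y 1) 1 := by
  have hη : eta g X Y 1 = 0 := by simp [eta, Delta]
  rw [Delta_succ, mixgap_eq_bernoulliMixGap hg]
  simp [hη, Delta, bernoulliMixGap]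

lemma Delta_pos (hg : ∀ h, 0 < g h) {t : ℕ} (ht : 1 ≤ t) : 0 < Delta g X Y t :=
  (Delta_one (X := X) (Y := Y) hg ▸ algLoss_pos hg _ _).trans_le (Delta_monotone hg ht)

lemma eta_succ_pos (hg : ∀ h, 0 < g h) {t : ℕ} (ht : 1 ≤ t) : 0 < eta g X Y (t + 1) :=
  div_pos (Real.log_pos one_lt_two) (Delta_pos hg ht)

lemma sum_algLoss_le (hg : ∀ h, 0 < g h) (hZ : Zfun D g ≤ 1) {T : ℕ} (hT : 1 ≤ T) :
    ∑ t ∈ Icc 1 T, algLoss g X Y (eta g X Y t) t ≤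
      Delta g X Y 1 + mixLoss (pri D g) (fun f => Lexp X Y D f T) (eta g X Y (T + 1)) := by
  have hpri : ∑ f, pri D g f ≤ 1 := (sum_pri D g).trans_le hZ
  induction T, hT using Nat.le_induction with
  | base =>
    rw [Icc_self, sum_singleton, ← Delta_one hg]
    exact le_add_of_nonneg_right <| mixLoss_nonneg (pri_pos hg) hpri
      (fun f => Lexp_nonneg X Y f 1) (eta_nonneg hg _)
  | succ T hT ih =>
    have hη : 0 < eta g X Y (T + 1) := eta_succ_pos hg hT
    have hincr := algLoss_le_mixLoss_sub (X := X) (Y := Y) hg hη T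
    have heta : eta g X Y (T + 2) ≤ eta g X Y (T + 1) :=
      div_le_div_of_nonneg_left (Real.log_nonneg one_le_two) (Delta_pos hg hT)
        (Delta_monotone hg T.le_succ)
    have hanti := mixLoss_antitone (L := fun f => Lexp X Y D f (T + 1)) (pri_pos hg) hpri
      (eta_succ_pos hg (by omega)) heta
    rw [sum_Icc_succ_top (by omega)]
    linarith

lemma mixLoss_pri_le (hg : ∀ h, 0 < g h) {d : ℕ} (hdD : d ≤ D) (f : (Fin d → Bool) → Bool)
    {η : ℝ} (hη : 0 < η) (t : ℕ) :
    mixLoss (pri D g) (fun f => Lexp X Y D f t) η ≤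
      Lexp X Y d f t + 1 / η * -Real.log (g d) := by
  have hle := mixLoss_le (L := fun f => Lexp X Y D f t) (pri_pos hg) hη fun x => f (trunc d x)
  have hpri : g d ≤ pri D g fun x => f (trunc d x) := le_pri hg hdD ((order_le_iff _).2 ⟨f, rfl⟩)
  have hlog := mul_le_mul_of_nonneg_left (neg_le_neg (Real.log_le_log (hg d) hpri))
    (one_div_nonneg.2 hη.le)
  simp only [Lexp_comp_trunc_full] at hle
  linarith

lemma regret_le (hg : ∀ h, 0 < g h) (hZ : Zfun D g ≤ 1) {d : ℕ} (hdD : d ≤ D) (T : ℕ) :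
    regret g X Y d T ≤ (1 + -Real.log (g d) / Real.log 2) * Delta g X Y T := by
  obtain ⟨f, hf⟩ : ∃ f : (Fin d → Bool) → Bool, Lexp X Y d f T = Lstar X Y d T :=
    exists_eq_ciInf_of_finite
  rcases Nat.eq_zero_or_pos T with rfl | hT
  · simp [regret, Delta, ← hf, Lexp_nonneg]
  have hsum := sum_algLoss_le (X := X) (Y := Y) hg hZ hT
  have hη : 0 < eta g X Y (T + 1) := eta_succ_pos hg hT
  have hmix := mixLoss_pri_le (X := X) (Y := Y) hg hdD f hη T
  have heta : 1 / eta g X Y (T + 1) * -Real.log (g d) =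
      -Real.log (g d) / Real.log 2 * Delta g X Y T := by
    rw [eta, Nat.add_sub_cancel, one_div_div]
    ring
  have hmono := Delta_monotone (X := X) (Y := Y) hg hT
  rw [regret, ← hf]
  linarith

lemma regret_gprop_le {d : ℕ} (hdD : d ≤ D) (T : ℕ) :
    regret gprop X Y d T ≤ (1 + 2 ^ (d + 1)) * Delta gprop X Y T := by
  have h := regret_le (X := X) (Y := Y) gprop_pos (Zfun_gprop_le_one D) hdD T
  rwa [log_gprop, neg_neg, mul_div_cancel_right₀ _ (Real.log_pos one_lt_two).ne'] at h

end AdaHedge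

section Levels

variable {h : ℕ} {X : ℕ → Fin D → Bool} {Y : ℕ → Bool}

/-- The number of errors minus the number of correct predictions of the `h`-th order expert `r`
on the rounds up to `t` whose context reaches the tree node `z`: the loss saved by flipping the
prediction of `r` at `z`. -/
def nodeGap (X : ℕ → Fin D → Bool) (Y : ℕ → Bool) (r : (Fin h → Bool) → Bool) (z : Fin h → Bool)
    (t : ℕ) : ℝ :=
  ∑ s ∈ Icc 1 t, if trunc h (X s) = z then (if Y s ≠ r z then 1 else -1) else 0

lemma Lexp_sub_Lexp (r f : (Fin h → Bool) → Bool) (t : ℕ) :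
    Lexp X Y h r t - Lexp X Y h f t = ∑ z, if f z = r z then 0 else nodeGap X Y r z t := by
  have hnode (z : Fin h → Bool) : (if f z = r z then 0 else nodeGap X Y r z t) =
      ∑ s ∈ Icc 1 t, if trunc h (X s) = z then
        (if f z = r z then 0 else if Y s ≠ r z then 1 else -1) else (0 : ℝ) := by
    split_ifs
    · simp
    · rfl
  simp_rw [Lexp, ← sum_sub_distrib, hnode]
  rw [sum_comm]
  refine sum_congr rfl fun s _ => ?_
  rw [sum_ite_eq, if_pos (mem_univ _)]
  cases f (trunc h (X s)) <;> cases r (trunc h (X s)) <;> cases Y s <;> simp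

lemma Lexp_update {r f : (Fin h → Bool) → Bool} {z : Fin h → Bool} (hf : f z = !r z) (t : ℕ) :
    Lexp X Y h (Function.update f z (r z)) t = Lexp X Y h f t + nodeGap X Y r z t := by
  simp_rw [Lexp, nodeGap, ← sum_add_distrib]
  refine sum_congr rfl fun s _ => ?_
  by_cases hz : trunc h (X s) = z
  · rw [hz, Function.update_self, hf]
    cases r z <;> cases Y s <;> simp
  · simp [hz]

/-- The unnormalised exponential weight of all `h`-th order experts after round `t`. -/
def levelSum (X : ℕ → Fin D → Bool) (Y : ℕ → Bool) (h : ℕ) (η : ℝ) (t : ℕ) : ℝ :=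
  ∑ f : (Fin h → Bool) → Bool, Real.exp (-η * Lexp X Y h f t)

/-- The part of `levelSum` due to the experts that predict `y` in round `t`. -/
def predLevelSum (X : ℕ → Fin D → Bool) (Y : ℕ → Bool) (h : ℕ) (η : ℝ) (t : ℕ) (y : Bool) : ℝ :=
  ∑ f : (Fin h → Bool) → Bool with f (trunc h (X t)) = y, Real.exp (-η * Lexp X Y h f t)

lemma levelSum_pos (h : ℕ) (η : ℝ) (t : ℕ) : 0 < levelSum X Y h η t :=
  sum_pos (fun _ _ => Real.exp_pos _) univ_nonempty

lemma exp_le_levelSum (f : (Fin h → Bool) → Bool) (η : ℝ) (t : ℕ) :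
    Real.exp (-η * Lexp X Y h f t) ≤ levelSum X Y h η t :=
  single_le_sum (f := fun f => Real.exp (-η * Lexp X Y h f t))
    (fun _ _ => (Real.exp_pos _).le) (mem_univ f)

lemma predLevelSum_le_levelSum (h : ℕ) (η : ℝ) (t : ℕ) (y : Bool) :
    predLevelSum X Y h η t y ≤ levelSum X Y h η t :=
  sum_le_sum_of_subset_of_nonneg (filter_subset _ _) fun _ _ _ => (Real.exp_pos _).le

-- Flipping the prediction at the current node maps the summands injectively into `levelSum`.
lemma predLevelSum_not_le (r : (Fin h → Bool) → Bool) (η : ℝ) (t : ℕ) :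
    predLevelSum X Y h η t (!r (trunc h (X t))) ≤
      Real.exp (η * nodeGap X Y r (trunc h (X t)) t) * levelSum X Y h η t := by
  set z := trunc h (X t)
  let flip (f : (Fin h → Bool) → Bool) := Function.update f z (r z)
  have hflip : ∀ f ∈ univ.filter (fun f : (Fin h → Bool) → Bool => f z = !r z),
      Real.exp (-η * Lexp X Y h f t) =
        Real.exp (η * nodeGap X Y r z t) * Real.exp (-η * Lexp X Y h (flip f) t) := by
    intro f hf
    rw [Lexp_update (mem_filter.1 hf).2, ← Real.exp_add]
    ring_nf
  have hinj : Set.InjOn flip (univ.filter fun f : (Fin h → Bool) → Bool => f z = !r z) := by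
    intro f₁ h₁ f₂ h₂ heq
    funext x
    by_cases hx : x = z
    · rw [hx, (mem_filter.1 h₁).2, (mem_filter.1 h₂).2]
    · simpa [flip, Function.update_of_ne hx] using congrFun heq x
  rw [predLevelSum, sum_congr rfl hflip, ← mul_sum]
  gcongr
  rw [← sum_image (f := fun f => Real.exp (-η * Lexp X Y h f t)) hinj]
  exact sum_le_sum_of_subset_of_nonneg (subset_univ _) fun _ _ _ => (Real.exp_pos _).le

lemma exp_Lexp_eq_mul_prod (r f : (Fin h → Bool) → Bool) (η : ℝ) (t : ℕ) :
    Real.exp (-η * Lexp X Y h f t) = Real.exp (-η * Lexp X Y h r t) *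
      ∏ z, if f z = r z then 1 else Real.exp (η * nodeGap X Y r z t) := by
  have hsum : -η * Lexp X Y h f t = -η * Lexp X Y h r t +
      ∑ z, η * if f z = r z then 0 else nodeGap X Y r z t := by
    rw [← mul_sum, ← Lexp_sub_Lexp]
    ring
  rw [hsum, Real.exp_add, Real.exp_sum]
  congr 1
  refine prod_congr rfl fun z _ => ?_
  split_ifs <;> simp

lemma levelSum_eq_mul_prod (r : (Fin h → Bool) → Bool) (η : ℝ) (t : ℕ) :
    levelSum X Y h η t = Real.exp (-η * Lexp X Y h r t) *
      ∏ z, (1 + Real.exp (η * nodeGap X Y r z t)) := by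
  have hfactor (z : Fin h → Bool) : 1 + Real.exp (η * nodeGap X Y r z t) =
      ∑ y : Bool, if y = r z then 1 else Real.exp (η * nodeGap X Y r z t) := by
    cases r z <;> simp [add_comm]
  rw [levelSum, sum_congr rfl fun f _ => exp_Lexp_eq_mul_prod r f η t, ← mul_sum]
  simp_rw [hfactor]
  rw [prod_univ_sum, Fintype.piFinset_univ]

lemma levelSum_le (r : (Fin h → Bool) → Bool) {η : ℝ} {t : ℕ}
    (hgap : ∀ z, η * nodeGap X Y r z t ≤ 1 / 10) :
    levelSum X Y h η t ≤ Real.exp (-η * Lexp X Y h r t) * (211 / 100) ^ 2 ^ h := by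
  rw [levelSum_eq_mul_prod r]
  gcongr
  calc ∏ z, (1 + Real.exp (η * nodeGap X Y r z t)) ≤ ∏ _z : Fin h → Bool, (211 / 100 : ℝ) := by
        refine prod_le_prod (fun z _ => by positivity) fun z _ => ?_
        have htenth := exp_le_one_add_add_sq (x := 1 / 10) (by norm_num [abs_of_pos])
        linarith [Real.exp_le_exp.2 (hgap z)]
    _ = (211 / 100) ^ 2 ^ h := by simp [div_pow]

end Levels

section LevelDecomposition

variable {g : ℕ → ℝ} {d : ℕ} {X : ℕ → Fin D → Bool} {Y : ℕ → Bool}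

lemma partitionFn_eq_sum_levelSum (g : ℕ → ℝ) (η : ℝ) (t : ℕ) :
    partitionFn g X Y η t = ∑ h ∈ range (D + 1), g h * levelSum X Y h η t := by
  rw [partitionFn, expWeightSum, sum_pri_mul]
  simp only [Lexp_comp_trunc_full, levelSum]

lemma partitionFn_mul_wpred_eq_sum (hg : ∀ h, 0 < g h) (η : ℝ) (t : ℕ) (y : Bool) :
    partitionFn g X Y η t * wpred g X Y η t y =
      ∑ h ∈ range (D + 1), g h * predLevelSum X Y h η t y := by
  have hsum := sum_pri_mul g fun f => if f (X t) = y then Real.exp (-η * Lexp X Y D f t) else 0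
  simp only [mul_ite, mul_zero, Lexp_comp_trunc_full] at hsum
  rw [partitionFn_mul_wpred hg, hsum]
  simp only [predLevelSum, sum_filter]

lemma mul_levelSum_le_partitionFn (hg : ∀ h, 0 < g h) {h : ℕ} (hD : h ≤ D) (η : ℝ) (t : ℕ) :
    g h * levelSum X Y h η t ≤ partitionFn g X Y η t := by
  rw [partitionFn_eq_sum_levelSum]
  exact single_le_sum (f := fun h => g h * levelSum X Y h η t)
    (fun i _ => (mul_pos (hg i) (levelSum_pos i η t)).le) (mem_range.2 (by omega))

lemma mul_exp_le_partitionFn (hg : ∀ h, 0 < g h) {h : ℕ} (hD : h ≤ D)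
    (f : (Fin h → Bool) → Bool) (η : ℝ) (t : ℕ) :
    g h * Real.exp (-η * Lexp X Y h f t) ≤ partitionFn g X Y η t :=
  (mul_le_mul_of_nonneg_left (exp_le_levelSum f η t) (hg h).le).trans
    (mul_levelSum_le_partitionFn hg hD η t)

lemma sum_range_mul_predLevelSum_le (hg : ∀ h, 0 < g h) (hZ : Zfun D g ≤ 1) (hdD : d ≤ D)
    (fs : (Fin d → Bool) → Bool) {η κ : ℝ} (hη : 0 ≤ η) {t : ℕ}
    (hlow : ∀ f : (Fin (d - 1) → Bool) → Bool, Lexp X Y d fs t - Lexp X Y (d - 1) f t ≤ κ)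
    (y : Bool) :
    ∑ h ∈ range d, g h * predLevelSum X Y h η t y ≤
      Real.exp (η * κ) / g d * partitionFn g X Y η t := by
  set E := Real.exp (η * κ) * Real.exp (-η * Lexp X Y d fs t) with hE
  have hlevel : ∀ h ∈ range d, predLevelSum X Y h η t y ≤ 2 ^ 2 ^ h * E := by
    intro h hh
    have hhd : h ≤ d - 1 := by have := mem_range.1 hh; omega
    calc predLevelSum X Y h η t y ≤ ∑ _f : (Fin h → Bool) → Bool, E := by
          refine (predLevelSum_le_levelSum h η t y).trans (sum_le_sum fun f _ => ?_)
          have hf := hlow fun z => f (trunc h z)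
          rw [Lexp_comp_trunc X Y hhd] at hf
          rw [hE, ← Real.exp_add, Real.exp_le_exp]
          nlinarith
      _ = 2 ^ 2 ^ h * E := by simp
  have hmass : ∑ h ∈ range d, 2 ^ 2 ^ h * g h ≤ 1 :=
    (sum_le_sum_of_subset_of_nonneg (range_subset_range.2 (by omega))
      fun h _ _ => mul_nonneg (by positivity) (hg h).le).trans hZ
  calc ∑ h ∈ range d, g h * predLevelSum X Y h η t y
      ≤ ∑ h ∈ range d, g h * (2 ^ 2 ^ h * E) :=
        sum_le_sum fun h hh => mul_le_mul_of_nonneg_left (hlevel h hh) (hg h).le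
    _ = (∑ h ∈ range d, 2 ^ 2 ^ h * g h) * E := by
        rw [sum_mul]
        exact sum_congr rfl fun h _ => by ring
    _ ≤ E := mul_le_of_le_one_left (by positivity) hmass
    _ = Real.exp (η * κ) / g d * (g d * Real.exp (-η * Lexp X Y d fs t)) := by
        rw [hE, ← mul_assoc, div_mul_cancel₀ _ (hg d).ne']
    _ ≤ Real.exp (η * κ) / g d * partitionFn g X Y η t :=
        mul_le_mul_of_nonneg_left (mul_exp_le_partitionFn hg hdD fs η t)
          (div_nonneg (Real.exp_pos _).le (hg d).le)

end LevelDecomposition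

section HighLevels

variable {d h : ℕ} {X : ℕ → Fin D → Bool} {Y : ℕ → Bool}

lemma mul_three_quarters_pow_le (m : ℕ) : m * (3 / 4 : ℝ) ^ m ≤ 4 := by
  have hbernoulli := one_add_mul_le_pow (show (-2 : ℝ) ≤ 1 / 3 by norm_num) m
  have hinv : (1 + 1 / 3 : ℝ) ^ m * (3 / 4) ^ m = 1 := by rw [← mul_pow]; norm_num
  nlinarith [show (0 : ℝ) < (3 / 4) ^ m by positivity]

lemma quarter_pow_mul_pow_le {n m : ℕ} (hn : 1 ≤ n) (hnm : 4 * n ≤ m) :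
    (1 / 4 : ℝ) ^ m * (211 / 100) ^ m ≤ 4 * n / m * (1 / 4) ^ n := by
  have hm : (0 : ℝ) < m := by exact_mod_cast (by omega : 0 < m)
  have hn' : (1 : ℝ) ≤ n := by exact_mod_cast hn
  have hfour : (4 : ℝ) ^ n ≤ (1415 / 1000) ^ m := by
    calc (4 : ℝ) ^ n ≤ ((1415 / 1000) ^ 4) ^ n := by gcongr; norm_num
      _ = (1415 / 1000) ^ (4 * n) := by rw [pow_mul]
      _ ≤ (1415 / 1000) ^ m := pow_le_pow_right₀ (by norm_num) hnm
  have hbase : (1 / 4 : ℝ) ^ m * (211 / 100) ^ m * 4 ^ n * m ≤ 4 * n := by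
    calc (1 / 4 : ℝ) ^ m * (211 / 100) ^ m * 4 ^ n * m
        ≤ (1 / 4) ^ m * (211 / 100) ^ m * (1415 / 1000) ^ m * m := by gcongr
      _ = (1 / 4 * (211 / 100) * (1415 / 1000)) ^ m * m := by rw [mul_pow, mul_pow]
      _ ≤ (3 / 4) ^ m * m := by gcongr; norm_num
      _ ≤ 4 * n := by linarith [mul_three_quarters_pow_le m]
  have hinv : (4 : ℝ) ^ n * (1 / 4) ^ n = 1 := by rw [← mul_pow]; norm_num
  calc (1 / 4 : ℝ) ^ m * (211 / 100) ^ m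
      = (1 / 4) ^ m * (211 / 100) ^ m * 4 ^ n * (1 / 4) ^ n := by
        rw [mul_assoc _ (4 ^ n), hinv, mul_one]
    _ ≤ 4 * n / m * (1 / 4) ^ n := by
        gcongr
        rwa [le_div_iff₀ hm]

lemma gprop_mul_pow_le (hdh : d + 2 ≤ h) :
    gprop h * (211 / 100) ^ 2 ^ h ≤ 4 * 2 ^ d / 2 ^ h * gprop d := by
  have hpow : 4 * 2 ^ d ≤ 2 ^ h :=
    (by ring : 4 * 2 ^ d = 2 ^ (d + 2)).trans_le (Nat.pow_le_pow_right (by norm_num) hdh)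
  simpa [gprop_eq] using quarter_pow_mul_pow_le Nat.one_le_two_pow hpow

lemma gprop_mul_levelSum_le (hdh : d ≤ h) (hhD : h ≤ D) (fs : (Fin d → Bool) → Bool) {η : ℝ}
    {t : ℕ} (hgap : ∀ z : Fin h → Bool,
      η * nodeGap X Y (fun z : Fin h → Bool => fs (trunc d z)) z t ≤ 1 / 10) :
    gprop h * levelSum X Y h η t ≤ 4 * 2 ^ d / 2 ^ h * partitionFn gprop X Y η t := by
  rcases le_or_gt h (d + 1) with hnear | hfar
  · have hone : (1 : ℝ) ≤ 4 * 2 ^ d / 2 ^ h := by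
      rw [one_le_div (by positivity)]
      calc (2 : ℝ) ^ h ≤ 2 ^ (d + 2) := pow_le_pow_right₀ one_le_two (by omega)
        _ = 4 * 2 ^ d := by ring
    exact (mul_levelSum_le_partitionFn gprop_pos hhD η t).trans
      (le_mul_of_one_le_left (partitionFn_pos gprop_pos η t).le hone)
  · have hlevel := levelSum_le _ hgap
    rw [Lexp_comp_trunc X Y hdh] at hlevel
    have hgpos := gprop_pos h
    calc gprop h * levelSum X Y h η t
        ≤ gprop h * (Real.exp (-η * Lexp X Y d fs t) * (211 / 100) ^ 2 ^ h) := by gcongr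
      _ = Real.exp (-η * Lexp X Y d fs t) * (gprop h * (211 / 100) ^ 2 ^ h) := by ring
      _ ≤ Real.exp (-η * Lexp X Y d fs t) * (4 * 2 ^ d / 2 ^ h * gprop d) :=
          mul_le_mul_of_nonneg_left (gprop_mul_pow_le hfar) (Real.exp_pos _).le
      _ = 4 * 2 ^ d / 2 ^ h * (gprop d * Real.exp (-η * Lexp X Y d fs t)) := by ring
      _ ≤ 4 * 2 ^ d / 2 ^ h * partitionFn gprop X Y η t := by
          gcongr
          exact mul_exp_le_partitionFn gprop_pos (hdh.trans hhD) fs η t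

lemma wpred_gprop_not_le (hdD : d ≤ D) (fs : (Fin d → Bool) → Bool) {η κ : ℝ} (hη : 0 ≤ η)
    {t : ℕ}
    (hlow : ∀ f : (Fin (d - 1) → Bool) → Bool, Lexp X Y d fs t - Lexp X Y (d - 1) f t ≤ κ)
    (hgap : ∀ h ∈ Icc d D, ∀ z : Fin h → Bool,
      η * nodeGap X Y (fun z : Fin h → Bool => fs (trunc d z)) z t ≤ 1 / 10) :
    wpred gprop X Y η t (!fs (trunc d (X t))) ≤ Real.exp (η * κ) / gprop d +
      ∑ h ∈ Icc d D, 4 * 2 ^ d / 2 ^ h *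
        Real.exp (η * nodeGap X Y (fun z : Fin h → Bool => fs (trunc d z)) (trunc h (X t)) t) := by
  have hZ := partitionFn_pos (X := X) (Y := Y) gprop_pos η t
  refine le_of_mul_le_mul_left ?_ hZ
  rw [partitionFn_mul_wpred_eq_sum gprop_pos, mul_add, mul_sum, mul_comm (partitionFn _ _ _ _ _),
    ← sum_range_add_sum_Ico _ (by omega : d ≤ D + 1)]
  refine add_le_add (sum_range_mul_predLevelSum_le gprop_pos (Zfun_gprop_le_one D) hdD fs hη hlow _)
    (sum_le_sum fun h hh => ?_)
  obtain ⟨hdh, hhD⟩ : d ≤ h ∧ h ≤ D := mem_Icc.1 hh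
  have hflip := predLevelSum_not_le (X := X) (Y := Y) (fun z : Fin h → Bool => fs (trunc d z)) η t
  simp only [trunc_trunc hdh] at hflip
  have hmass := gprop_mul_levelSum_le hdh hhD fs (hgap h hh)
  nlinarith [mul_le_mul_of_nonneg_left hflip (gprop_pos h).le, mul_le_mul_of_nonneg_left hmass
    (Real.exp_pos (η * nodeGap X Y (fun z : Fin h → Bool => fs (trunc d z)) (trunc h (X t)) t)).le]

end HighLevels

section Visits

variable {ι : Type*} [DecidableEq ι]

/-- The number of rounds `s ∈ {1, …, t}` at which the sequence `x` sits at `z`. -/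
def visitCount (x : ℕ → ι) (z : ι) (t : ℕ) : ℕ :=
  #{s ∈ Icc 1 t | x s = z}

lemma visitCount_succ (x : ℕ → ι) (z : ι) (t : ℕ) :
    visitCount x z (t + 1) = visitCount x z t + if x (t + 1) = z then 1 else 0 := by
  simp only [visitCount, card_filter]
  rw [sum_Icc_succ_top (by omega)]

lemma sum_visitCount_self [Fintype ι] (x : ℕ → ι) (F : ℕ → ℝ) (T : ℕ) :
    ∑ t ∈ Icc 1 T, F (visitCount x (x t) t) = ∑ z, ∑ k ∈ Icc 1 (visitCount x z T), F k := by
  induction T with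
  | zero => simp [visitCount]
  | succ T ih =>
    have hstep (z : ι) : ∑ k ∈ Icc 1 (visitCount x z (T + 1)), F k =
        ∑ k ∈ Icc 1 (visitCount x z T), F k +
          if x (T + 1) = z then F (visitCount x z (T + 1)) else 0 := by
      rw [visitCount_succ]
      split_ifs with hz
      · exact sum_Icc_succ_top (by omega) F
      · simp
    rw [sum_Icc_succ_top (by omega), ih, sum_congr rfl fun z _ => hstep z, sum_add_distrib,
      sum_ite_eq, if_pos (mem_univ _)]

lemma sum_exp_neg_mul_le {c : ℝ} (hc : 0 < c) (n : ℕ) :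
    ∑ k ∈ Icc 1 n, Real.exp (-c * k) ≤ 1 / c := by
  suffices h : ∑ k ∈ Icc 1 n, Real.exp (-c * k) ≤ (1 - Real.exp (-c * n)) / c from
    h.trans (div_le_div_of_nonneg_right (sub_le_self _ (Real.exp_pos _).le) hc.le)
  induction n with
  | zero => simp
  | succ n ih =>
    have hexp : Real.exp (-c * n) = Real.exp (-c * (n + 1 : ℕ)) * Real.exp c := by
      rw [← Real.exp_add]
      push_cast
      ring_nf
    have hstep : Real.exp (-c * (n + 1 : ℕ)) ≤
        (Real.exp (-c * n) - Real.exp (-c * (n + 1 : ℕ))) / c := by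
      rw [le_div_iff₀ hc, hexp]
      nlinarith [Real.exp_pos (-c * (n + 1 : ℕ)), Real.add_one_le_exp c]
    rw [sum_Icc_succ_top (by omega)]
    calc _ ≤ (1 - Real.exp (-c * n)) / c +
          (Real.exp (-c * n) - Real.exp (-c * (n + 1 : ℕ))) / c := add_le_add ih hstep
      _ = _ := by ring

lemma sum_exp_neg_visitCount_le [Fintype ι] (x : ℕ → ι) {c : ℝ} (hc : 0 < c) (T : ℕ) :
    ∑ t ∈ Icc 1 T, Real.exp (-c * visitCount x (x t) t) ≤ Fintype.card ι / c := by
  rw [sum_visitCount_self x fun k => Real.exp (-c * k)]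
  calc _ ≤ ∑ _z : ι, 1 / c := sum_le_sum fun z _ => sum_exp_neg_mul_le hc _
    _ = Fintype.card ι / c := by simp [div_eq_mul_inv]

lemma sum_min_one_exp_le {a c : ℝ} (ha : 0 ≤ a) (hc : 0 < c) (T : ℕ) :
    ∑ t ∈ Icc 1 T, min 1 (Real.exp (-c * (t - a))) ≤ a + 1 + 1 / c := by
  set N := ⌊a⌋₊ + 1
  have hNa : (N : ℝ) ≤ a + 1 := by
    push_cast [N]
    linarith [Nat.floor_le ha]
  have haN : a ≤ N := by exact_mod_cast (Nat.lt_floor_add_one a).le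
  have hsplit (m : ℕ) : ∑ t ∈ Icc 1 (N + m), min 1 (Real.exp (-c * ((t : ℕ) - a))) ≤
      N + ∑ k ∈ Icc 1 m, Real.exp (-c * k) := by
    induction m with
    | zero =>
      calc _ ≤ ∑ _t ∈ Icc 1 N, (1 : ℝ) := sum_le_sum fun t _ => min_le_left _ _
        _ = _ := by simp
    | succ m ih =>
      have htail : min 1 (Real.exp (-c * ((N + m + 1 : ℕ) - a))) ≤
          Real.exp (-c * (m + 1 : ℕ)) := by
        refine (min_le_right _ _).trans (Real.exp_le_exp.2 ?_)
        push_cast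
        nlinarith
      rw [← add_assoc, sum_Icc_succ_top (by omega), sum_Icc_succ_top (by omega)]
      linarith
  calc _ ≤ ∑ t ∈ Icc 1 (N + T), min 1 (Real.exp (-c * ((t : ℕ) - a))) :=
        sum_le_sum_of_subset_of_nonneg (Icc_subset_Icc_right (Nat.le_add_left T N))
          fun t _ _ => le_min zero_le_one (Real.exp_pos _).le
    _ ≤ N + ∑ k ∈ Icc 1 T, Real.exp (-c * k) := hsplit T
    _ ≤ a + 1 + 1 / c := add_le_add hNa (sum_exp_neg_mul_le hc T)

end Visits

section DeltaSquared

variable {g : ℕ → ℝ} {X : ℕ → Fin D → Bool} {Y : ℕ → Bool}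

lemma Delta_sq_succ_le (hg : ∀ h, 0 < g h) {t : ℕ} (ht : 1 ≤ Delta g X Y t) (y : Bool) :
    Delta g X Y (t + 1) ^ 2 ≤
      Delta g X Y t ^ 2 + 3 * wpred g X Y (eta g X Y (t + 1)) (t + 1) y := by
  have hpos : 0 < Delta g X Y t := by linarith
  have hlog : Real.log 2 < 1 := Real.log_two_lt_d9.trans (by norm_num)
  have hmul : Delta g X Y t * eta g X Y (t + 1) = Real.log 2 := mul_div_cancel₀ _ hpos.ne'
  have hη : 0 < eta g X Y (t + 1) := div_pos (Real.log_pos one_lt_two) hpos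
  have hη' : eta g X Y (t + 1) ≤ 1 := by nlinarith
  have hle := mixgap_le_mul_wpred (X := X) (Y := Y) hg hη hη' (t + 1) y
  have hnonneg := mixgap_nonneg (X := X) (Y := Y) hg hη.le (t + 1)
  have hone := mixgap_le_one (X := X) (Y := Y) hg hη.le (t + 1)
  have hw := wpred_pos (X := X) (Y := Y) hg (eta g X Y (t + 1)) (t + 1) y
  rw [Delta_succ]
  set m := mixgap g X Y (eta g X Y (t + 1)) (t + 1)
  set w := wpred g X Y (eta g X Y (t + 1)) (t + 1) y
  have hcross : Delta g X Y t * m ≤ w := by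
    calc Delta g X Y t * m ≤ Delta g X Y t * (eta g X Y (t + 1) * w) := by gcongr
      _ = Real.log 2 * w := by rw [← mul_assoc, hmul]
      _ ≤ w := mul_le_of_le_one_left hw.le hlog.le
  have hsq : m * m ≤ w := by nlinarith
  nlinarith

lemma Delta_sq_le (hg : ∀ h, 0 < g h) {Δ₀ : ℝ} (hΔ₀ : 1 ≤ Δ₀) (y : ℕ → Bool) (T : ℕ) :
    Delta g X Y T ^ 2 ≤ (Δ₀ + 1) ^ 2 + 3 * ∑ t ∈ Icc 1 T,
      if Δ₀ ≤ Delta g X Y (t - 1) then wpred g X Y (eta g X Y t) t (y t) else 0 := by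
  have hterm (t : ℕ) :
      0 ≤ if Δ₀ ≤ Delta g X Y (t - 1) then wpred g X Y (eta g X Y t) t (y t) else 0 := by
    split_ifs
    exacts [(wpred_pos hg _ _ _).le, le_rfl]
  induction T with
  | zero => simpa [Delta] using sq_nonneg (Δ₀ + 1)
  | succ T ih =>
    rcases le_or_gt Δ₀ (Delta g X Y T) with hlarge | hsmall
    · rw [sum_Icc_succ_top (by omega), Nat.add_sub_cancel, if_pos hlarge]
      linarith [Delta_sq_succ_le hg (hΔ₀.trans hlarge) (y (T + 1))]
    · have hle : Delta g X Y (T + 1) ≤ Δ₀ + 1 :=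
        add_le_add hsmall.le (mixgap_le_one hg (eta_nonneg hg (T + 1)) (T + 1))
      have hsum := sum_nonneg fun t (_ : t ∈ Icc 1 (T + 1)) => hterm t
      linarith [pow_le_pow_left₀ (Delta_nonneg hg (T + 1)) hle 2]

end DeltaSquared

section GoodTrajectories

lemma sum_level_visits_le {d : ℕ} (X : ℕ → Fin D → Bool) (hd : 1 ≤ d) {c : ℝ} (hc : 0 < c)
    (T : ℕ) :
    ∑ h ∈ Icc d D, ∑ t ∈ Icc 1 T, 8 * 2 ^ d / 2 ^ h *
        Real.exp (-c * visitCount (fun s => trunc h (X s)) (trunc h (X t)) t) ≤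
      8 * D * 2 ^ d * (1 / c) := by
  have hlevel (h : ℕ) : ∑ t ∈ Icc 1 T, 8 * 2 ^ d / 2 ^ h *
      Real.exp (-c * visitCount (fun s => trunc h (X s)) (trunc h (X t)) t) ≤
        8 * 2 ^ d * (1 / c) := by
    rw [← mul_sum]
    calc _ ≤ 8 * 2 ^ d / 2 ^ h * ((Fintype.card (Fin h → Bool) : ℝ) / c) := by
          gcongr
          exact sum_exp_neg_visitCount_le _ hc T
      _ = 8 * 2 ^ d * (1 / c) := by
          simp only [Fintype.card_fun, Fintype.card_bool, Fintype.card_fin]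
          push_cast
          field_simp
  have hcard : (#(Icc d D) : ℝ) ≤ D := by
    rw [Nat.card_Icc]
    exact_mod_cast (by omega : D + 1 - d ≤ D)
  calc _ ≤ ∑ _h ∈ Icc d D, 8 * 2 ^ d * (1 / c) := sum_le_sum fun h _ => hlevel h
    _ = #(Icc d D) * (8 * 2 ^ d * (1 / c)) := by rw [sum_const, nsmul_eq_mul]
    _ ≤ D * (8 * 2 ^ d * (1 / c)) := by gcongr
    _ = 8 * D * 2 ^ d * (1 / c) := by ring

variable {d : ℕ} {X : ℕ → Fin D → Bool} {Y : ℕ → Bool} {fs : (Fin d → Bool) → Bool}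
  {ε k₁ k₂ η H : ℝ} {T t : ℕ}

/-- A sample path on which the `d`-th order expert `fs` wins at the rate `ε / 4`, up to the slacks
`k₁`, `k₂`, in every round `t ≤ T`: against flipping its prediction at any node of depth `d`
to `D`, and against every expert of order `d - 1`. -/
structure GoodTrajectory (X : ℕ → Fin D → Bool) (Y : ℕ → Bool) (fs : (Fin d → Bool) → Bool)
    (ε k₁ k₂ : ℝ) (T : ℕ) : Prop where
  nodeGap_le : ∀ h ∈ Icc d D, ∀ z : Fin h → Bool, ∀ t ≤ T,
    nodeGap X Y (fun z : Fin h → Bool => fs (trunc d z)) z t ≤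
      k₁ - ε / 4 * visitCount (fun s => trunc h (X s)) z t
  Lexp_sub_le : ∀ f : (Fin (d - 1) → Bool) → Bool, ∀ t ≤ T,
    Lexp X Y d fs t - Lexp X Y (d - 1) f t ≤ k₂ - ε / 4 * t

lemma min_one_exp_mul_add_le {κ b : ℝ} (hb : 0 ≤ b) (hH : 0 ≤ H) (hHη : H ≤ η) :
    min 1 (Real.exp (η * κ + b)) ≤ min 1 (Real.exp (H * κ + b)) := by
  rcases le_or_gt κ 0 with hκ | hκ
  · gcongr min 1 (Real.exp (?_ + b))
    exact mul_le_mul_of_nonpos_right hHη hκ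
  · rw [min_eq_left (Real.one_le_exp (by positivity : 0 ≤ H * κ + b))]
    exact min_le_left _ _

lemma exp_le_two_mul_exp {u v : ℝ} (huv : u ≤ 1 / 10 + v) : Real.exp u ≤ 2 * Real.exp v := by
  have htenth : Real.exp (1 / 10) ≤ 2 :=
    (exp_le_one_add_add_sq (by norm_num [abs_of_pos])).trans (by norm_num)
  calc Real.exp u ≤ Real.exp (1 / 10) * Real.exp v := by
        rw [← Real.exp_add]
        exact Real.exp_le_exp.2 huv
    _ ≤ 2 * Real.exp v := by gcongr

lemma GoodTrajectory.mul_nodeGap_le (hgood : GoodTrajectory X Y fs ε k₁ k₂ T) (hε : 0 < ε)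
    (ht : t ≤ T) (hH : 0 < H) (hHη : H ≤ η) (hηk : η * k₁ ≤ 1 / 10) {h : ℕ} (hh : h ∈ Icc d D)
    (z : Fin h → Bool) :
    η * nodeGap X Y (fun z : Fin h → Bool => fs (trunc d z)) z t ≤
      1 / 10 + -(H * ε / 4) * visitCount (fun s => trunc h (X s)) z t := by
  have hgap := mul_le_mul_of_nonneg_left (hgood.nodeGap_le h hh z t ht) (hH.le.trans hHη)
  have hrate := mul_le_mul_of_nonneg_right hHη
    (by positivity : 0 ≤ ε / 4 * visitCount (fun s => trunc h (X s)) z t)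
  linarith

lemma GoodTrajectory.wpred_not_le (hgood : GoodTrajectory X Y fs ε k₁ k₂ T) (hdD : d ≤ D)
    (hε : 0 < ε) (ht : t ≤ T) (hH : 0 < H) (hHη : H ≤ η) (hηk : η * k₁ ≤ 1 / 10) :
    wpred gprop X Y η t (!fs (trunc d (X t))) ≤
      min 1 (Real.exp (H * (k₂ - ε / 4 * t) + 2 ^ (d + 1) * Real.log 2)) +
      ∑ h ∈ Icc d D, 8 * 2 ^ d / 2 ^ h *
        Real.exp (-(H * ε / 4) * visitCount (fun s => trunc h (X s)) (trunc h (X t)) t) := by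
  have hgap {h : ℕ} (hh : h ∈ Icc d D) (z : Fin h → Bool) :=
    hgood.mul_nodeGap_le hε ht hH hHη hηk hh z
  have hlow : Real.exp (η * (k₂ - ε / 4 * t)) / gprop d =
      Real.exp (η * (k₂ - ε / 4 * t) + 2 ^ (d + 1) * Real.log 2) := by
    rw [← neg_neg (2 ^ (d + 1) * Real.log 2), ← log_gprop, ← sub_eq_add_neg, Real.exp_sub,
      Real.exp_log (gprop_pos d)]
  have hhigh : ∀ h ∈ Icc d D, 4 * 2 ^ d / 2 ^ h * Real.exp (η * nodeGap X Y
        (fun z : Fin h → Bool => fs (trunc d z)) (trunc h (X t)) t) ≤ 8 * 2 ^ d / 2 ^ h *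
        Real.exp (-(H * ε / 4) * visitCount (fun s => trunc h (X s)) (trunc h (X t)) t) := by
    intro h hh
    calc _ ≤ 4 * 2 ^ d / 2 ^ h * (2 * Real.exp (-(H * ε / 4) *
            visitCount (fun s => trunc h (X s)) (trunc h (X t)) t)) := by
          gcongr
          exact exp_le_two_mul_exp (hgap hh _)
      _ = _ := by ring
  have hbound := wpred_gprop_not_le hdD fs (hH.le.trans hHη) (fun f => hgood.Lexp_sub_le f t ht)
    fun h hh z => (hgap hh z).trans (by
      linarith [(by positivity : 0 ≤ H * ε / 4 * visitCount (fun s => trunc h (X s)) z t)])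
  rw [hlow] at hbound
  have hone := wpred_add_wpred_not (X := X) (Y := Y) gprop_pos η t (fs (trunc d (X t)))
  have hpos := wpred_pos (X := X) (Y := Y) gprop_pos η t (fs (trunc d (X t)))
  refine le_trans ?_ (add_le_add
    (min_one_exp_mul_add_le (κ := k₂ - ε / 4 * t) (by positivity) hH.le hHη) (sum_le_sum hhigh))
  rw [← min_add_add_right]
  exact le_min ((by linarith : _ ≤ (1 : ℝ)).trans
    (le_add_of_nonneg_right (sum_nonneg fun h _ => by positivity))) hbound

lemma GoodTrajectory.wpred_eta_not_le (hgood : GoodTrajectory X Y fs ε k₁ k₂ T) (hdD : d ≤ D)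
    (hε : 0 < ε) (hk₁ : 0 < k₁) (ht : t ∈ Icc 1 T) (hlarge : 7 * k₁ ≤ Delta gprop X Y (t - 1)) :
    wpred gprop X Y (eta gprop X Y t) t (!fs (trunc d (X t))) ≤
      min 1 (Real.exp (-(eta gprop X Y (T + 1) * ε / 4) *
        (t - (4 * k₂ / ε + 8 * 2 ^ d / ε * Delta gprop X Y T)))) +
      ∑ h ∈ Icc d D, 8 * 2 ^ d / 2 ^ h * Real.exp (-(eta gprop X Y (T + 1) * ε / 4) *
        visitCount (fun s => trunc h (X s)) (trunc h (X t)) t) := by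
  obtain ⟨ht1, htT⟩ := mem_Icc.1 ht
  have hpos : 0 < Delta gprop X Y (t - 1) := by linarith
  have hΔ : 0 < Delta gprop X Y T := Delta_pos gprop_pos (ht1.trans htT)
  have hHη : eta gprop X Y (T + 1) ≤ eta gprop X Y t :=
    div_le_div_of_nonneg_left (Real.log_nonneg one_le_two) hpos
      (Delta_monotone gprop_pos (by omega))
  have hηk : eta gprop X Y t * k₁ ≤ 1 / 10 := by
    rw [eta, div_mul_eq_mul_div, div_le_iff₀ hpos]
    nlinarith [Real.log_two_lt_d9]
  have hHΔ : eta gprop X Y (T + 1) * Delta gprop X Y T = Real.log 2 := div_mul_cancel₀ _ hΔ.ne'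
  convert hgood.wpred_not_le hdD hε htT (eta_succ_pos gprop_pos (ht1.trans htT)) hHη hηk using 4
  rw [← hHΔ]
  field_simp
  ring

lemma GoodTrajectory.sum_wpred_le (hgood : GoodTrajectory X Y fs ε k₁ k₂ T) (hd : 1 ≤ d)
    (hdD : d ≤ D) (hε : 0 < ε) (hk₁ : 0 < k₁) (hk₂ : 0 ≤ k₂) (hT : 1 ≤ T) :
    ∑ t ∈ Icc 1 T, (if 7 * k₁ ≤ Delta gprop X Y (t - 1) then
        wpred gprop X Y (eta gprop X Y t) t (!fs (trunc d (X t))) else 0) ≤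
      62 * (D * 2 ^ d / ε) * Delta gprop X Y T + 4 * k₂ / ε + 1 := by
  have hΔ : 0 < Delta gprop X Y T := Delta_pos gprop_pos hT
  have hH : 0 < eta gprop X Y (T + 1) := eta_succ_pos gprop_pos hT
  set c := eta gprop X Y (T + 1) * ε / 4 with hcdef
  set a := 4 * k₂ / ε + 8 * 2 ^ d / ε * Delta gprop X Y T with ha
  have hc : 0 < c := by positivity
  have hinv : 1 / c ≤ 6 / ε * Delta gprop X Y T := by
    rw [hcdef, eta, Nat.add_sub_cancel, div_le_iff₀ (by positivity)]
    field_simp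
    linarith [Real.log_two_gt_d9]
  have hDd : (2 : ℝ) ^ d ≤ D * 2 ^ d :=
    le_mul_of_one_le_left (by positivity) (by exact_mod_cast hd.trans hdD)
  have hDd' : (1 : ℝ) ≤ D * 2 ^ d := (one_le_pow₀ one_le_two).trans hDd
  calc _ ≤ ∑ t ∈ Icc 1 T, (min 1 (Real.exp (-c * (t - a))) + ∑ h ∈ Icc d D, 8 * 2 ^ d / 2 ^ h *
        Real.exp (-c * visitCount (fun s => trunc h (X s)) (trunc h (X t)) t)) := by
        refine sum_le_sum fun t ht => ?_
        split_ifs with hlarge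
        · exact hgood.wpred_eta_not_le hdD hε hk₁ ht hlarge
        · positivity
    _ ≤ a + 1 + 1 / c + 8 * D * 2 ^ d * (1 / c) := by
        rw [sum_add_distrib, sum_comm]
        exact add_le_add (sum_min_one_exp_le (by positivity) hc T) (sum_level_visits_le X hd hc T)
    _ = 4 * k₂ / ε + 1 + 8 * 2 ^ d * (Delta gprop X Y T / ε) + (1 + 8 * (D * 2 ^ d)) * (1 / c) := by
        rw [ha]
        ring
    _ ≤ 4 * k₂ / ε + 1 + 8 * (D * 2 ^ d) * (Delta gprop X Y T / ε) +
        (9 * (D * 2 ^ d)) * (6 / ε * Delta gprop X Y T) := by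
        gcongr
        linarith
    _ = _ := by ring

lemma GoodTrajectory.Delta_sq_le (hgood : GoodTrajectory X Y fs ε k₁ k₂ T) (hd : 1 ≤ d)
    (hdD : d ≤ D) (hε : 0 < ε) (hk₁ : 1 ≤ k₁) (hk₂ : 0 ≤ k₂) (hT : 1 ≤ T) :
    Delta gprop X Y T ^ 2 ≤ (7 * k₁ + 1) ^ 2 +
      3 * (62 * (D * 2 ^ d / ε) * Delta gprop X Y T + 4 * k₂ / ε + 1) := by
  have hsq := CTAH.Delta_sq_le (X := X) (Y := Y) gprop_pos (by linarith : 1 ≤ 7 * k₁)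
    (fun t => !fs (trunc d (X t))) T
  linarith [hgood.sum_wpred_le hd hdD hε (by linarith) hk₂ hT]

lemma le_of_sq_le_add_mul {n P L z : ℝ} (hn : 1 ≤ n) (hP : 1 ≤ P) (hL : 1 ≤ L) (hε : 0 < ε)
    (hε1 : ε ≤ 1) (hk₀ : 0 ≤ k₁) (hk₁ : k₁ ≤ 8 * n * L / ε) (hk₂ : k₂ ≤ 4 * P * L / ε)
    (h : z ^ 2 ≤ (7 * k₁ + 1) ^ 2 + 3 * (62 * (n * P / ε) * z + 4 * k₂ / ε + 1)) :
    z ≤ 300 * (P * n * L / ε ^ 2) := by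
  set B := P * n * L / ε ^ 2 with hB
  have hεε : ε ^ 2 ≤ ε := by nlinarith
  have hB1 : 1 ≤ B := by
    rw [hB, one_le_div (by positivity)]
    nlinarith [one_le_mul_of_one_le_of_one_le (one_le_mul_of_one_le_of_one_le hP hn) hL]
  have hk₁B : k₁ ≤ 8 * B := by
    calc k₁ ≤ 8 * (1 * n * L / ε) := hk₁.trans_eq (by ring)
      _ ≤ 8 * B := by rw [hB]; gcongr
  have hk₂B : 4 * k₂ / ε ≤ 16 * B := by
    calc 4 * k₂ / ε ≤ 4 * (4 * P * L / ε) / ε := by gcongr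
      _ = 16 * (P * 1 * L / ε ^ 2) := by field_simp; norm_num
      _ ≤ 16 * B := by rw [hB]; gcongr
  have hlin : n * P / ε ≤ B := by
    calc n * P / ε = P * n * 1 / ε := by ring
      _ ≤ B := by rw [hB]; gcongr
  have hsq : (7 * k₁ + 1) ^ 2 ≤ (57 * B) ^ 2 :=
    pow_le_pow_left₀ (by linarith) (by linarith) 2
  by_contra! hz
  have hlin' : n * P / ε * z ≤ B * z := mul_le_mul_of_nonneg_right hlin (by linarith)
  nlinarith

lemma GoodTrajectory.Delta_le {L : ℝ} (hgood : GoodTrajectory X Y fs ε k₁ k₂ T) (hd : 1 ≤ d)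
    (hdD : d ≤ D) (hε : 0 < ε) (hε1 : ε ≤ 1) (hL : 1 ≤ L) (hk₁ : 1 ≤ k₁) (hk₂ : 0 ≤ k₂)
    (hk₁L : k₁ ≤ 8 * D * L / ε) (hk₂L : k₂ ≤ 4 * 2 ^ d * L / ε) :
    Delta gprop X Y T ≤ 300 * (2 ^ d * D * L / ε ^ 2) := by
  rcases Nat.eq_zero_or_pos T with rfl | hT
  · rw [Delta]
    positivity
  · exact le_of_sq_le_add_mul (by exact_mod_cast hd.trans hdD) (one_le_pow₀ one_le_two) hL hε hε1
      (by linarith) hk₁L hk₂L (hgood.Delta_sq_le hd hdD hε hk₁ hk₂ hT)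

lemma GoodTrajectory.regret_le {L : ℝ} (hgood : GoodTrajectory X Y fs ε k₁ k₂ T) (hd : 1 ≤ d)
    (hdD : d ≤ D) (hε : 0 < ε) (hε1 : ε ≤ 1) (hL : 1 ≤ L) (hk₁ : 1 ≤ k₁) (hk₂ : 0 ≤ k₂)
    (hk₁L : k₁ ≤ 8 * D * L / ε) (hk₂L : k₂ ≤ 4 * 2 ^ d * L / ε) :
    regret gprop X Y d T ≤ 900 * 2 ^ (2 * d) * (D / ε ^ 2 * L) := by
  have hpow : (1 : ℝ) ≤ 2 ^ d := one_le_pow₀ one_le_two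
  calc regret gprop X Y d T ≤ (1 + 2 ^ (d + 1)) * Delta gprop X Y T := regret_gprop_le hdD T
    _ ≤ (3 * 2 ^ d) * (300 * (2 ^ d * D * L / ε ^ 2)) := by
        gcongr
        · exact Delta_nonneg gprop_pos T
        · rw [pow_succ]
          linarith
        · exact hgood.Delta_le hd hdD hε hε1 hL hk₁ hk₂ hk₁L hk₂L
    _ = 900 * 2 ^ (2 * d) * (D / ε ^ 2 * L) := by
        rw [two_mul, pow_add]
        ring

end GoodTrajectories

section Ville

open ProbabilityTheory

variable {Ω : Type*} [MeasurableSpace Ω] {μ : Measure Ω} {ξ : ℕ → Ω → ℝ}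

lemma stronglyAdapted_prod_natural (hmeas : ∀ t, StronglyMeasurable (ξ t)) :
    StronglyAdapted (Filtration.natural ξ hmeas) fun n => ∏ s ∈ Icc 1 n, ξ s := fun _ =>
  Finset.stronglyMeasurable_prod _ fun s hs =>
    (Filtration.stronglyAdapted_natural hmeas s).mono
      ((Filtration.natural ξ hmeas).mono (mem_Icc.1 hs).2)

lemma integrable_prod_of_iIndepFun (hmeas : ∀ t, StronglyMeasurable (ξ t))
    (hindep : iIndepFun ξ μ) (hint : ∀ t, Integrable (ξ t) μ) (n : ℕ) :
    Integrable (∏ s ∈ Icc 1 n, ξ s) μ := by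
  have := hindep.isProbabilityMeasure
  induction n with
  | zero => exact integrable_const 1
  | succ n ih =>
    rw [prod_Icc_succ_top (by omega)]
    exact (hindep.indepFun_finsetProd_of_notMem (fun t => (hmeas t).measurable)
      (by simp)).integrable_mul ih (hint _)

lemma martingale_prod_of_iIndepFun (hmeas : ∀ t, StronglyMeasurable (ξ t))
    (hindep : iIndepFun ξ μ) (hint : ∀ t, Integrable (ξ t) μ) (hmean : ∀ t, μ[ξ t] = 1) :
    Martingale (fun n => ∏ s ∈ Icc 1 n, ξ s) (Filtration.natural ξ hmeas) μ := by
  have := hindep.isProbabilityMeasure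
  have hprod := integrable_prod_of_iIndepFun hmeas hindep hint
  refine martingale_nat (stronglyAdapted_prod_natural hmeas) hprod fun n => ?_
  have hpull := condExp_mul_of_stronglyMeasurable_left
    (stronglyAdapted_prod_natural hmeas n)
    (prod_Icc_succ_top (by omega : 1 ≤ n + 1) ξ ▸ hprod (n + 1)) (hint (n + 1))
  rw [prod_Icc_succ_top (by omega)]
  filter_upwards [hpull, hindep.condExp_natural_ae_eq_of_lt hmeas n.lt_succ_self]
    with ω hpullω hmeanω
  rw [hpullω, Pi.mul_apply, hmeanω, hmean, mul_one]

lemma measure_exists_le_prod_le_of_mean_eq_one (hmeas : ∀ t, StronglyMeasurable (ξ t))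
    (hindep : iIndepFun ξ μ) (hnonneg : ∀ t ω, 0 ≤ ξ t ω) (hint : ∀ t, Integrable (ξ t) μ)
    (hmean : ∀ t, μ[ξ t] = 1) {K : ℝ} (hK : 0 < K) (T : ℕ) :
    μ {ω | ∃ t ≤ T, K ≤ ∏ s ∈ Icc 1 t, ξ s ω} ≤ ENNReal.ofReal (1 / K) := by
  have := hindep.isProbabilityMeasure
  have hmart := martingale_prod_of_iIndepFun hmeas hindep hint hmean
  have hpos : 0 ≤ fun n => ∏ s ∈ Icc 1 n, ξ s := fun _ ω => by
    simpa using prod_nonneg fun s _ => hnonneg s ω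
  have hdoob := maximal_ineq hmart.submartingale hpos (ε := ⟨K, hK.le⟩) T
  have hset : {ω | ∃ t ≤ T, K ≤ ∏ s ∈ Icc 1 t, ξ s ω} = {ω | K ≤
      (range (T + 1)).sup' nonempty_range_add_one fun k => (∏ s ∈ Icc 1 k, ξ s) ω} := by
    ext ω
    simp [le_sup'_iff]
  have htotal : ∫ ω, (∏ s ∈ Icc 1 T, ξ s) ω ∂μ = 1 := by
    simpa using (hmart.setIntegral_eq (Nat.zero_le T) MeasurableSet.univ).symm
  rw [one_div, ENNReal.ofReal_inv_of_pos hK, ENNReal.le_inv_iff_mul_le, mul_comm, hset,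
    ENNReal.ofReal_eq_coe_nnreal hK.le]
  refine hdoob.trans (ENNReal.ofReal_le_one.2 ?_)
  exact htotal ▸ setIntegral_le_integral (hmart.integrable T) (.of_forall (hpos T))

lemma measure_exists_le_prod_le (hmeas : ∀ t, StronglyMeasurable (ξ t))
    (hindep : iIndepFun ξ μ) (hnonneg : ∀ t ω, 0 ≤ ξ t ω) (hint : ∀ t, Integrable (ξ t) μ)
    (hmean : ∀ t, μ[ξ t] ≤ 1) {K : ℝ} (hK : 0 < K) (T : ℕ) :
    μ {ω | ∃ t ≤ T, K ≤ ∏ s ∈ Icc 1 t, ξ s ω} ≤ ENNReal.ofReal (1 / K) := by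
  have := hindep.isProbabilityMeasure
  -- Raising each factor by the constant `1 - μ[ξ t]` makes its mean exactly one.
  have hraise (t : ℕ) : 0 ≤ 1 - μ[ξ t] := sub_nonneg.2 (hmean t)
  refine le_trans (measure_mono fun ω => ?_) (measure_exists_le_prod_le_of_mean_eq_one
    (ξ := fun t ω => ξ t ω + (1 - μ[ξ t])) (fun t => (hmeas t).add_const _)
    (hindep.comp (fun t y => y + (1 - ∫ ω, ξ t ω ∂μ)) fun t => measurable_id.add_const _)
    (fun t ω => add_nonneg (hnonneg t ω) (hraise t)) (fun t => (hint t).add (integrable_const _))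
    (fun t => ?_) hK T)
  · rintro ⟨t, ht, hKt⟩
    exact ⟨t, ht, hKt.trans (prod_le_prod (fun s _ => hnonneg s ω)
      fun s _ => le_add_of_nonneg_right (hraise s))⟩
  · rw [integral_add (hint t) (integrable_const _)]
    simp

end Ville

section Concentration

open ProbabilityTheory

variable {Ω α : Type*} [MeasurableSpace Ω] [MeasurableSpace α] {μ : Measure Ω}
  {Z : ℕ → Ω → α} {ε : ℝ}

lemma exp_tilt_le {w v : ℝ} (hε : 0 ≤ ε) (hε2 : ε ≤ 1 / 2) (hwv : |w| ≤ v) (hv : v ≤ 1) :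
    Real.exp (ε / 2 * (w + ε / 4 * v)) ≤ 1 + ε / 2 * (w + ε * v) := by
  have hv0 : 0 ≤ v := (abs_nonneg w).trans hwv
  have habs : |ε / 2 * (w + ε / 4 * v)| ≤ ε / 2 * (9 / 8 * v) := by
    rw [abs_mul, abs_of_nonneg (by positivity)]
    gcongr
    refine (abs_add_le _ _).trans ?_
    rw [abs_of_nonneg (by positivity : 0 ≤ ε / 4 * v)]
    nlinarith
  have hsq : (ε / 2 * (w + ε / 4 * v)) ^ 2 ≤ (ε / 2 * (9 / 8 * v)) ^ 2 := sq_le_sq' (by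
    linarith [neg_abs_le (ε / 2 * (w + ε / 4 * v))]) ((le_abs_self _).trans habs)
  have hvv : ε ^ 2 * v ^ 2 ≤ ε ^ 2 * v := by
    gcongr
    nlinarith
  nlinarith [exp_le_one_add_add_sq (habs.trans (by nlinarith)), mul_nonneg (sq_nonneg ε) hv0]

lemma integral_exp_tilt_le_one [IsProbabilityMeasure μ] {w v : Ω → ℝ} (hw : Integrable w μ)
    (hv : Integrable v μ) (hε : 0 ≤ ε) (hε2 : ε ≤ 1 / 2) (hwv : ∀ ω, |w ω| ≤ v ω)
    (hv1 : ∀ ω, v ω ≤ 1) (hdrift : ∫ ω, w ω ∂μ ≤ -ε * ∫ ω, v ω ∂μ) :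
    ∫ ω, Real.exp (ε / 2 * (w ω + ε / 4 * v ω)) ∂μ ≤ 1 := by
  have hlin : Integrable (fun ω => ε / 2 * (w ω + ε * v ω)) μ :=
    (hw.add (hv.const_mul ε)).const_mul (ε / 2)
  calc ∫ ω, Real.exp (ε / 2 * (w ω + ε / 4 * v ω)) ∂μ
      ≤ ∫ ω, (1 + ε / 2 * (w ω + ε * v ω)) ∂μ :=
        integral_mono_of_nonneg (.of_forall fun ω => (Real.exp_pos _).le)
          ((integrable_const _).add hlin)
          (.of_forall fun ω => exp_tilt_le hε hε2 (hwv ω) (hv1 ω))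
    _ = 1 + ε / 2 * (∫ ω, w ω ∂μ + ε * ∫ ω, v ω ∂μ) := by
        rw [integral_add (integrable_const _) hlin, integral_const_mul,
          integral_add hw (hv.const_mul ε), integral_const_mul]
        simp
    _ ≤ 1 := by nlinarith

-- Freedman-type bound: each increment `w` has drift at most `-ε` times its own scale `v`, so the
-- tilted process `∏ exp (ε / 2 * (w + ε / 4 * v))` is a supermartingale.
lemma measure_exists_lt_sum_le {w v : α → ℝ} (hZ : ∀ t, Measurable (Z t))
    (hindep : iIndepFun Z μ) (hw : Measurable w) (hv : Measurable v) (hwv : ∀ a, |w a| ≤ v a)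
    (hv1 : ∀ a, v a ≤ 1) (hε : 0 < ε) (hε2 : ε ≤ 1 / 2)
    (hdrift : ∀ t, ∫ ω, w (Z t ω) ∂μ ≤ -ε * ∫ ω, v (Z t ω) ∂μ) {K : ℝ} (hK : 0 < K) (T : ℕ) :
    μ {ω | ∃ t ≤ T, 2 * Real.log K / ε - ε / 4 * ∑ s ∈ Icc 1 t, v (Z s ω) <
      ∑ s ∈ Icc 1 t, w (Z s ω)} ≤ ENNReal.ofReal (1 / K) := by
  have := hindep.isProbabilityMeasure
  have hint {u : α → ℝ} {c : ℝ} (hu : Measurable u) (hc : ∀ a, |u a| ≤ c) (t : ℕ) :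
      Integrable (fun ω => u (Z t ω)) μ :=
    .of_bound (hu.comp (hZ t)).aestronglyMeasurable c (.of_forall fun ω => hc _)
  have hw1 (a : α) : |w a| ≤ 1 := (hwv a).trans (hv1 a)
  have hvabs (a : α) : |v a| ≤ 1 := (abs_of_nonneg ((abs_nonneg _).trans (hwv a))).trans_le (hv1 a)
  set tilt : α → ℝ := fun a => Real.exp (ε / 2 * (w a + ε / 4 * v a)) with htilt
  have htilt_meas : Measurable tilt := by fun_prop
  have htilt_le (a : α) : |tilt a| ≤ 2 := by
    rw [abs_of_pos (Real.exp_pos _)]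
    have hincr : w a + ε * v a ≤ 2 := by
      nlinarith [le_of_abs_le (hw1 a), le_of_abs_le (hvabs a)]
    nlinarith [exp_tilt_le hε.le hε2 (hwv a) (hv1 a), mul_le_mul_of_nonneg_left hincr hε.le]
  refine le_trans (measure_mono ?_) (measure_exists_le_prod_le
    (fun t => (htilt_meas.comp (hZ t)).stronglyMeasurable) (hindep.comp _ fun _ => htilt_meas)
    (fun t ω => (Real.exp_pos _).le) (hint htilt_meas htilt_le)
    (fun t => integral_exp_tilt_le_one (hint hw hw1 t) (hint hv hvabs t) hε.le hε2
      (fun ω => hwv _) (fun ω => hv1 _) (hdrift t)) hK T)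
  rintro ω ⟨t, ht, hlt⟩
  refine ⟨t, ht, ?_⟩
  simp only [Function.comp_apply, htilt, ← Real.exp_sum, ← mul_sum, sum_add_distrib]
  rw [← Real.log_le_iff_le_exp hK]
  rw [sub_lt_iff_lt_add, div_lt_iff₀ hε] at hlt
  linarith

lemma measure_exists_family_lt_sum_le {ι : Type*} [Fintype ι] {w v : ι → α → ℝ}
    (hZ : ∀ t, Measurable (Z t)) (hindep : iIndepFun Z μ) (hw : ∀ i, Measurable (w i))
    (hv : ∀ i, Measurable (v i)) (hwv : ∀ i a, |w i a| ≤ v i a) (hv1 : ∀ i a, v i a ≤ 1)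
    (hε : 0 < ε) (hε2 : ε ≤ 1 / 2)
    (hdrift : ∀ i t, ∫ ω, w i (Z t ω) ∂μ ≤ -ε * ∫ ω, v i (Z t ω) ∂μ)
    {n δ : ℝ} (hn : 0 < n) (hcard : Fintype.card ι ≤ n) (hδ : 0 < δ) (T : ℕ) :
    μ {ω | ∃ i, ∃ t ≤ T, 2 * Real.log (n / δ) / ε - ε / 4 * ∑ s ∈ Icc 1 t, v i (Z s ω) <
      ∑ s ∈ Icc 1 t, w i (Z s ω)} ≤ ENNReal.ofReal δ := by
  rw [Set.ofPred_exists]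
  calc _ ≤ ∑ _i : ι, ENNReal.ofReal (1 / (n / δ)) :=
        (measure_iUnion_fintype_le _ _).trans (sum_le_sum fun i _ => measure_exists_lt_sum_le hZ
          hindep (hw i) (hv i) (hwv i) (hv1 i) hε hε2 (hdrift i) (by positivity) T)
    _ = ENNReal.ofReal (Fintype.card ι * (1 / (n / δ))) := by
        rw [ENNReal.ofReal_mul (Nat.cast_nonneg _), ENNReal.ofReal_natCast]
        simp
    _ ≤ ENNReal.ofReal δ := by
        refine ENNReal.ofReal_le_ofReal ?_
        rw [one_div_div, ← mul_div_assoc, div_le_iff₀ hn, mul_comm δ]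
        gcongr

end Concentration

section Slack

variable {n ε δ : ℝ}

/-- The additive slack up to which, with probability `1 - δ`, the gaps at all nodes of the complete
context tree of depth `D` decrease by at least `ε / 4` per visit. -/
def nodeSlack (D : ℕ) (ε δ : ℝ) : ℝ := 2 * Real.log (2 ^ (D + 1) / δ) / ε

/-- The additive slack up to which, with probability `1 - δ`, each of the `2 ^ 2 ^ (d - 1)` experts
of order `d - 1` loses at least `ε / 4` per round to the reference expert. -/
def expertSlack (d : ℕ) (ε δ : ℝ) : ℝ := 2 * Real.log (2 ^ 2 ^ (d - 1) / δ) / ε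

lemma log_two_pow_div_half (m : ℕ) (hδ : 0 < δ) :
    Real.log (2 ^ m / (δ / 2)) = (m + 1) * Real.log 2 - Real.log δ := by
  rw [Real.log_div (by positivity) (by positivity), Real.log_div hδ.ne' two_ne_zero, Real.log_pow]
  ring

lemma one_sub_log_le_log_div (hn : 1 ≤ n) (hε : 0 < ε) (hε4 : ε ≤ 1 / 4) (hδ : 0 < δ) :
    1 - Real.log δ ≤ Real.log (n / (ε * δ)) := by
  have hexp : Real.exp 1 * ε ≤ n := by nlinarith [Real.exp_one_lt_d9]
  rw [← div_div, Real.log_div (by positivity) hδ.ne']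
  gcongr
  rwa [Real.le_log_iff_exp_le (by positivity), le_div_iff₀ hε]

lemma nodeSlack_le {L : ℝ} (hD : 1 ≤ D) (hε : 0 < ε) (hδ : 0 < δ) (hδ1 : δ ≤ 1)
    (hL : 1 - Real.log δ ≤ L) :
    nodeSlack D ε (δ / 2) ≤ 8 * D * L / ε := by
  have hD' : (1 : ℝ) ≤ D := by exact_mod_cast hD
  refine div_le_div_of_nonneg_right ?_ hε.le
  rw [log_two_pow_div_half _ hδ]
  push_cast
  nlinarith [Real.log_two_lt_d9, Real.log_nonpos hδ.le hδ1]

lemma one_le_nodeSlack (hε : 0 < ε) (hε1 : ε ≤ 1) (hδ : 0 < δ) (hδ1 : δ ≤ 1) :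
    1 ≤ nodeSlack D ε (δ / 2) := by
  rw [nodeSlack, le_div_iff₀ hε, log_two_pow_div_half _ hδ]
  push_cast
  nlinarith [Real.log_two_gt_d9, Real.log_nonpos hδ.le hδ1, (Nat.cast_nonneg D : (0 : ℝ) ≤ D)]

lemma expertSlack_le {L : ℝ} (d : ℕ) (hε : 0 < ε) (hδ : 0 < δ) (hδ1 : δ ≤ 1)
    (hL : 1 - Real.log δ ≤ L) :
    expertSlack d ε (δ / 2) ≤ 4 * 2 ^ d * L / ε := by
  have hpow : (1 : ℝ) ≤ 2 ^ (d - 1) := one_le_pow₀ one_le_two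
  have hpow_le : (2 : ℝ) ^ (d - 1) ≤ 2 ^ d := pow_le_pow_right₀ one_le_two (by omega)
  refine div_le_div_of_nonneg_right ?_ hε.le
  rw [log_two_pow_div_half _ hδ]
  push_cast
  nlinarith [Real.log_two_lt_d9, Real.log_nonpos hδ.le hδ1]

lemma expertSlack_nonneg (d : ℕ) (hε : 0 < ε) (hδ : 0 < δ) (hδ1 : δ ≤ 1) :
    0 ≤ expertSlack d ε (δ / 2) := by
  have hpow : (1 : ℝ) ≤ 2 ^ 2 ^ (d - 1) := one_le_pow₀ one_le_two
  have hlog : 0 ≤ Real.log (2 ^ 2 ^ (d - 1) / (δ / 2)) :=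
    Real.log_nonneg ((one_le_div (by positivity)).2 (by linarith))
  unfold expertSlack
  positivity

end Slack

section Margins

variable {d : ℕ} {fs : (Fin d → Bool) → Bool} {p : (Fin D → Bool) → Bool → ℝ} {ε : ℝ}

/-- The error probability of the tree expert `f` when contexts and labels have joint law `p`. -/
def risk {h : ℕ} (p : (Fin D → Bool) → Bool → ℝ) (f : (Fin h → Bool) → Bool) : ℝ :=
  ∑ x, p x (!f (trunc h x))

/-- Massart-type condition on the joint law `p`: given any context, the label predicted by `fs` is
more likely than the other one by at least `ε`, written without conditional probabilities so that
null contexts are harmless. -/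
def LabelMargin (p : (Fin D → Bool) → Bool → ℝ) (fs : (Fin d → Bool) → Bool) (ε : ℝ) : Prop :=
  ∀ x, ε * ∑ y, p x y ≤ p x (fs (trunc d x)) - p x (!fs (trunc d x))

/-- Every expert of order `d - 1` errs with probability larger than `fs` does by at least `2 * ε`;
the factor `2` is that of `α_{d-1,d} = (π*_{d-1} - π*_d) / 2`. -/
def OrderMargin (p : (Fin D → Bool) → Bool → ℝ) (fs : (Fin d → Bool) → Bool) (ε : ℝ) : Prop :=
  ∀ f : (Fin (d - 1) → Bool) → Bool, 2 * ε ≤ risk p f - risk p fs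

lemma LabelMargin.mono {ε' : ℝ} (hp : ∀ x y, 0 ≤ p x y) (hε : ε' ≤ ε) (h : LabelMargin p fs ε) :
    LabelMargin p fs ε' := fun x =>
  (mul_le_mul_of_nonneg_right hε (sum_nonneg fun y _ => hp x y)).trans (h x)

lemma OrderMargin.mono {ε' : ℝ} (hε : ε' ≤ ε) (h : OrderMargin p fs ε) :
    OrderMargin p fs ε' := fun f => (mul_le_mul_of_nonneg_left hε zero_le_two).trans (h f)

lemma risk_nonneg {h : ℕ} (hp : ∀ x y, 0 ≤ p x y) (f : (Fin h → Bool) → Bool) : 0 ≤ risk p f :=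
  sum_nonneg fun x _ => hp x _

-- One of the two constant experts errs with probability at most `1 / 2`.
lemma OrderMargin.le_quarter (hp : ∀ x y, 0 ≤ p x y) (hp1 : ∑ x, ∑ y, p x y = 1)
    (h : OrderMargin p fs ε) : ε ≤ 1 / 4 := by
  have hconst : risk p (fun _ : Fin (d - 1) → Bool => false) +
      risk p (fun _ : Fin (d - 1) → Bool => true) = 1 := by
    simpa [risk, sum_add_distrib] using hp1
  linarith [h fun _ => false, h fun _ => true, risk_nonneg hp fs]

lemma sum_mul_ite_ne_eq_risk {h : ℕ} (p : (Fin D → Bool) → Bool → ℝ)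
    (f : (Fin h → Bool) → Bool) :
    ∑ x, ∑ y, p x y * (if y ≠ f (trunc h x) then 1 else 0) = risk p f := by
  refine sum_congr rfl fun x _ => ?_
  cases f (trunc h x) <;> simp

lemma OrderMargin.sum_le (hp1 : ∑ x, ∑ y, p x y = 1) (hε : 0 ≤ ε) (h : OrderMargin p fs ε)
    (f : (Fin (d - 1) → Bool) → Bool) :
    ∑ x, ∑ y, p x y * ((if y ≠ fs (trunc d x) then 1 else 0) -
      (if y ≠ f (trunc (d - 1) x) then 1 else 0)) ≤ -ε * ∑ x, ∑ y, p x y * 1 := by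
  simp only [mul_sub, sum_sub_distrib, sum_mul_ite_ne_eq_risk, mul_one, hp1]
  linarith [h f]

lemma LabelMargin.sum_le (h : LabelMargin p fs ε) (A : (Fin D → Bool) → Prop)
    [DecidablePred A] :
    ∑ x, ∑ y, p x y * (if A x then (if y ≠ fs (trunc d x) then 1 else -1) else 0) ≤
      -ε * ∑ x, ∑ y, p x y * (if A x then 1 else 0) := by
  rw [mul_sum]
  refine sum_le_sum fun x _ => ?_
  split_ifs
  · have hx := h x
    cases hfs : fs (trunc d x) <;> simp [hfs] at hx ⊢ <;> linarith
  · simp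

end Margins

section Sampling

open ProbabilityTheory

variable {Ω : Type*} [MeasurableSpace Ω] {μ : Measure Ω}

/-- The joint law of a context `x` and a label `y`, as a real-valued mass function. -/
def jointLaw (μ : Measure Ω) (x : Ω → Fin D → Bool) (y : Ω → Bool)
    (a : Fin D → Bool) (b : Bool) : ℝ :=
  μ.real {ω | x ω = a ∧ y ω = b}

lemma integral_eq_sum_jointLaw [IsFiniteMeasure μ] {x : Ω → Fin D → Bool} {y : Ω → Bool}
    (hxy : Measurable fun ω => (x ω, y ω)) (F : (Fin D → Bool) → Bool → ℝ) :
    ∫ ω, F (x ω) (y ω) ∂μ = ∑ a, ∑ b, jointLaw μ x y a b * F a b := by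
  rw [← integral_map (f := fun a : (Fin D → Bool) × Bool => F a.1 a.2) hxy.aemeasurable
    (measurable_of_finite _).aestronglyMeasurable, integral_fintype (.of_finite),
    Fintype.sum_prod_type]
  refine sum_congr rfl fun a _ => sum_congr rfl fun b _ => ?_
  rw [map_measureReal_apply hxy (measurableSet_singleton _), smul_eq_mul, jointLaw]
  congr 2
  ext ω
  simp

lemma jointLaw_nonneg (x : Ω → Fin D → Bool) (y : Ω → Bool) (a : Fin D → Bool) (b : Bool) :
    0 ≤ jointLaw μ x y a b := measureReal_nonneg

lemma sum_jointLaw [IsProbabilityMeasure μ] {x : Ω → Fin D → Bool} {y : Ω → Bool}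
    (hxy : Measurable fun ω => (x ω, y ω)) : ∑ a, ∑ b, jointLaw μ x y a b = 1 := by
  simpa using (integral_eq_sum_jointLaw (μ := μ) hxy fun _ _ => 1).symm

lemma card_nodes_le (D : ℕ) : Fintype.card (Σ h : Fin (D + 1), (Fin h → Bool)) ≤ 2 ^ (D + 1) := by
  simp only [Fintype.card_sigma, Fintype.card_fun, Fintype.card_bool, Fintype.card_fin]
  rw [Fin.sum_univ_eq_sum_range fun i => 2 ^ i]
  exact (Nat.geomSum_lt le_rfl (by simp)).le

lemma nodeGap_comp_trunc {d h : ℕ} (hdh : d ≤ h) (X : ℕ → Fin D → Bool) (Y : ℕ → Bool)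
    (fs : (Fin d → Bool) → Bool) (z : Fin h → Bool) (t : ℕ) :
    nodeGap X Y (fun z : Fin h → Bool => fs (trunc d z)) z t =
      ∑ s ∈ Icc 1 t, if trunc h (X s) = z then
        (if Y s ≠ fs (trunc d (X s)) then 1 else -1) else 0 := by
  refine sum_congr rfl fun s _ => ?_
  by_cases hz : trunc h (X s) = z
  · simp [← hz, trunc_trunc hdh]
  · simp [hz]

variable {d : ℕ} {X : ℕ → Ω → Fin D → Bool} {Y : ℕ → Ω → Bool} {fs : (Fin d → Bool) → Bool}
  {ε δ : ℝ}

lemma measure_not_nodeGap_le (hmeas : ∀ t, Measurable fun ω => (X t ω, Y t ω))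
    (hindep : iIndepFun (fun t ω => (X t ω, Y t ω)) μ)
    (hlabel : ∀ t, LabelMargin (jointLaw μ (X t) (Y t)) fs ε) (hε : 0 < ε) (hε2 : ε ≤ 1 / 2)
    (hδ : 0 < δ) (T : ℕ) :
    μ {ω | ¬ ∀ h ∈ Icc d D, ∀ z, ∀ t ≤ T, nodeGap (fun s => X s ω) (fun s => Y s ω)
        (fun z : Fin h → Bool => fs (trunc d z)) z t ≤ nodeSlack D ε δ -
          ε / 4 * visitCount (fun s => trunc h (X s ω)) z t} ≤ ENNReal.ofReal δ := by
  have := hindep.isProbabilityMeasure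
  refine le_trans (measure_mono fun ω hω => ?_) (measure_exists_family_lt_sum_le
    (ι := Σ h : Fin (D + 1), (Fin h → Bool))
    (w := fun i a => if trunc i.1 a.1 = i.2 then
      (if a.2 ≠ fs (trunc d a.1) then 1 else -1) else 0)
    (v := fun i a => if trunc i.1 a.1 = i.2 then 1 else 0)
    hmeas hindep (fun _ => measurable_of_finite _) (fun _ => measurable_of_finite _)
    (fun i a => by split_ifs <;> simp) (fun i a => by split_ifs <;> simp) hε hε2 (fun i t => ?_)
    (n := 2 ^ (D + 1)) (by positivity) (by exact_mod_cast card_nodes_le D) hδ T)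
  · push Not at hω
    obtain ⟨h, hh, z, t, ht, hlt⟩ := hω
    obtain ⟨hdh, hhD⟩ := mem_Icc.1 hh
    refine ⟨⟨⟨h, by omega⟩, z⟩, t, ht, ?_⟩
    rw [nodeGap_comp_trunc hdh, visitCount, card_filter, nodeSlack] at hlt
    exact_mod_cast hlt
  · rw [integral_eq_sum_jointLaw (hmeas t) fun x y => if trunc i.1 x = i.2 then
        (if y ≠ fs (trunc d x) then 1 else -1) else 0,
      integral_eq_sum_jointLaw (hmeas t) fun x _ => if trunc i.1 x = i.2 then 1 else 0]
    exact (hlabel t).sum_le fun x => trunc i.1 x = i.2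

lemma measure_not_Lexp_sub_le (hmeas : ∀ t, Measurable fun ω => (X t ω, Y t ω))
    (hindep : iIndepFun (fun t ω => (X t ω, Y t ω)) μ)
    (horder : ∀ t, OrderMargin (jointLaw μ (X t) (Y t)) fs ε) (hε : 0 < ε) (hε2 : ε ≤ 1 / 2)
    (hδ : 0 < δ) (T : ℕ) :
    μ {ω | ¬ ∀ f : (Fin (d - 1) → Bool) → Bool, ∀ t ≤ T,
        Lexp (fun s => X s ω) (fun s => Y s ω) d fs t -
          Lexp (fun s => X s ω) (fun s => Y s ω) (d - 1) f t ≤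
        expertSlack d ε δ - ε / 4 * t} ≤ ENNReal.ofReal δ := by
  have := hindep.isProbabilityMeasure
  refine le_trans (measure_mono fun ω hω => ?_) (measure_exists_family_lt_sum_le
    (ι := (Fin (d - 1) → Bool) → Bool)
    (w := fun f a => (if a.2 ≠ fs (trunc d a.1) then 1 else 0) -
      (if a.2 ≠ f (trunc (d - 1) a.1) then 1 else 0))
    (v := fun _ _ => 1)
    hmeas hindep (fun _ => measurable_of_finite _) (fun _ => measurable_const)
    (fun f a => by split_ifs <;> simp) (fun _ _ => le_rfl) hε hε2 (fun f t => ?_)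
    (n := 2 ^ 2 ^ (d - 1)) (by positivity) (by simp) hδ T)
  · push Not at hω
    obtain ⟨f, t, ht, hlt⟩ := hω
    refine ⟨f, t, ht, ?_⟩
    simpa [expertSlack, Lexp, sum_sub_distrib] using hlt
  · rw [integral_eq_sum_jointLaw (hmeas t) fun x y => (if y ≠ fs (trunc d x) then 1 else 0) -
        (if y ≠ f (trunc (d - 1) x) then 1 else 0),
      integral_eq_sum_jointLaw (hmeas t) fun _ _ => 1]
    exact (horder t).sum_le (sum_jointLaw (hmeas t)) hε.le f

lemma ofReal_one_sub_le_measure [IsProbabilityMeasure μ] {s : Set Ω} (hδ : 0 ≤ δ)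
    (hs : μ sᶜ ≤ ENNReal.ofReal δ) : ENNReal.ofReal (1 - δ) ≤ μ s := by
  rw [ENNReal.ofReal_sub _ hδ, ENNReal.ofReal_one, tsub_le_iff_right]
  calc (1 : ENNReal) = μ (s ∪ sᶜ) := by rw [Set.union_compl_self, measure_univ]
    _ ≤ μ s + μ sᶜ := measure_union_le _ _
    _ ≤ μ s + ENNReal.ofReal δ := by gcongr

lemma ofReal_one_sub_le_measure_goodTrajectory
    (hmeas : ∀ t, Measurable fun ω => (X t ω, Y t ω))
    (hindep : iIndepFun (fun t ω => (X t ω, Y t ω)) μ)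
    (hlabel : ∀ t, LabelMargin (jointLaw μ (X t) (Y t)) fs ε)
    (horder : ∀ t, OrderMargin (jointLaw μ (X t) (Y t)) fs ε) (hε : 0 < ε) (hδ : 0 < δ) (T : ℕ) :
    ENNReal.ofReal (1 - δ) ≤ μ {ω | GoodTrajectory (fun s => X s ω) (fun s => Y s ω) fs ε
      (nodeSlack D ε (δ / 2)) (expertSlack d ε (δ / 2)) T} := by
  have := hindep.isProbabilityMeasure
  have hε2 : ε ≤ 1 / 2 := ((horder 0).le_quarter (jointLaw_nonneg _ _)
    (sum_jointLaw (hmeas 0))).trans (by norm_num)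
  refine ofReal_one_sub_le_measure hδ.le (le_trans (measure_mono ?_) ((measure_union_le _ _).trans
    ((add_le_add (measure_not_nodeGap_le hmeas hindep hlabel hε hε2 (half_pos hδ) T)
      (measure_not_Lexp_sub_le hmeas hindep horder hε hε2 (half_pos hδ) T)).trans_eq ?_)))
  · intro ω hω
    by_contra hgood
    rw [Set.mem_union, not_or] at hgood
    exact hω ⟨not_not.1 hgood.1, not_not.1 hgood.2⟩
  · rw [← ENNReal.ofReal_add (by positivity) (by positivity), add_halves]

end Sampling

theorem stochastic_regret_gprop_general {Ω : Type*} [MeasurableSpace Ω] {μ : Measure Ω} {d : ℕ}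
    {X : ℕ → Ω → Fin D → Bool} {Y : ℕ → Ω → Bool} {fs : (Fin d → Bool) → Bool} {ε δ : ℝ}
    (hd : 1 ≤ d) (hdD : d ≤ D) (hmeas : ∀ t, Measurable fun ω => (X t ω, Y t ω))
    (hindep : ProbabilityTheory.iIndepFun (fun t ω => (X t ω, Y t ω)) μ)
    (hlabel : ∀ t, LabelMargin (jointLaw μ (X t) (Y t)) fs ε)
    (horder : ∀ t, OrderMargin (jointLaw μ (X t) (Y t)) fs ε)
    (hε : 0 < ε) (hδ : 0 < δ) (hδ1 : δ ≤ 1) (T : ℕ) :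
    ENNReal.ofReal (1 - δ) ≤ μ {ω | regret gprop (fun s => X s ω) (fun s => Y s ω) d T ≤
      900 * 2 ^ (2 * d) * (D / ε ^ 2 * Real.log (D / (ε * δ)))} := by
  have := hindep.isProbabilityMeasure
  have hD : 1 ≤ D := hd.trans hdD
  have hε4 : ε ≤ 1 / 4 := (horder 0).le_quarter (jointLaw_nonneg _ _) (sum_jointLaw (hmeas 0))
  have hε1 : ε ≤ 1 := by linarith
  have hL := one_sub_log_le_log_div (by exact_mod_cast hD : (1 : ℝ) ≤ D) hε hε4 hδ
  refine (ofReal_one_sub_le_measure_goodTrajectory hmeas hindep hlabel horder hε hδ T).trans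
    (measure_mono fun ω hgood => ?_)
  exact GoodTrajectory.regret_le hgood hd hdD hε hε1 (by linarith [Real.log_nonpos hδ.le hδ1])
    (one_le_nodeSlack hε hε1 hδ hδ1) (expertSlack_nonneg d hε hδ hδ1)
    (nodeSlack_le hD hε hδ hδ1 hL) (expertSlack_le d hε hδ hδ1 hL)

section StochasticCondition

variable {d : ℕ} {Q : (Fin D → Bool) → ℝ} {Pc : (Fin d → Bool) → Bool → ℝ}
  {fs : (Fin d → Bool) → Bool}

lemma risk_eq_sum_jointP {h : ℕ} (f : (Fin h → Bool) → Bool) :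
    risk (fun x y => Q x * Pc (trunc d x) y) f = ∑ xh, jointP d Q Pc h xh (!f xh) := by
  simp only [risk, jointP]
  rw [sum_comm]
  simp

lemma pistar_le_risk {h : ℕ} (f : (Fin h → Bool) → Bool) :
    pistar d Q Pc h ≤ risk (fun x y => Q x * Pc (trunc d x) y) f := by
  rw [risk_eq_sum_jointP]
  refine sum_le_sum fun xh _ => ?_
  cases f xh
  · exact min_le_right _ _
  · exact min_le_left _ _

lemma risk_le_pistar (hQ : ∀ x, 0 ≤ Q x) (hfs : ∀ xd, Pc xd (!fs xd) ≤ Pc xd (fs xd)) :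
    risk (fun x y => Q x * Pc (trunc d x) y) fs ≤ pistar d Q Pc d := by
  rw [risk_eq_sum_jointP]
  refine sum_le_sum fun xd _ => ?_
  have hjoint : jointP d Q Pc d xd (!fs xd) ≤ jointP d Q Pc d xd (fs xd) := by
    refine sum_le_sum fun x _ => ?_
    split_ifs with hx
    · exact hx ▸ mul_le_mul_of_nonneg_left (hfs _) (hQ x)
    · exact le_rfl
  cases hxd : fs xd <;> simpa [hxd] using hjoint

lemma orderMargin_of_pistar (hQ : ∀ x, 0 ≤ Q x) (hfs : ∀ xd, Pc xd (!fs xd) ≤ Pc xd (fs xd)) :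
    OrderMargin (fun x y => Q x * Pc (trunc d x) y) fs
      ((pistar d Q Pc (d - 1) - pistar d Q Pc d) / 2) := fun f => by
  linarith [pistar_le_risk (Q := Q) (Pc := Pc) f, risk_le_pistar hQ hfs]

lemma labelMargin_of_iInf (hQ : ∀ x, 0 ≤ Q x) (hP1 : ∀ xd, ∑ y, Pc xd y = 1) :
    LabelMargin (fun x y => Q x * Pc (trunc d x) y) fs
      (2 * (⨅ xd, Pc xd (fs xd)) - 1) := fun x => by
  have hinf : ⨅ xd, Pc xd (fs xd) ≤ Pc (trunc d x) (fs (trunc d x)) :=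
    ciInf_le (Set.finite_range _).bddBelow _
  have hnot : Pc (trunc d x) (!fs (trunc d x)) = 1 - Pc (trunc d x) (fs (trunc d x)) := by
    have := hP1 (trunc d x)
    cases fs (trunc d x) <;> simp at this ⊢ <;> linarith
  simp only [← mul_sum, hP1, hnot]
  nlinarith [hQ x]

lemma log_rate_le_add_log_rate {C α ε δ d D : ℝ} (hC : 0 ≤ C) (hd : 1 ≤ d) (hD : 1 ≤ D) (hα : 0 < α)
    (hα1 : α ≤ 1) (hε : 0 < ε) (hε1 : ε ≤ 1) (hδ : 0 < δ) (hδ1 : δ ≤ 1) :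
    C * (D / ε ^ 2 * Real.log (D / (ε * δ))) ≤
      C * (d ^ 2 / α ^ 2 * Real.log (d / (α ^ 2 * δ)) +
        D * d / ε ^ 2 * Real.log (D / (ε * δ))) := by
  have hlogα : 0 ≤ Real.log (d / (α ^ 2 * δ)) := Real.log_nonneg <|
    (one_le_div (by positivity)).2 ((mul_le_one₀ (pow_le_one₀ hα.le hα1) hδ.le hδ1).trans hd)
  have hlogε : 0 ≤ Real.log (D / (ε * δ)) := Real.log_nonneg <|
    (one_le_div (by positivity)).2 ((mul_le_one₀ hε1 hδ.le hδ1).trans hD)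
  gcongr
  refine le_add_of_nonneg_of_le (by positivity) ?_
  gcongr
  exact le_mul_of_one_le_right (by linarith) hd

end StochasticCondition

/-- Theorem 1, part 2: stochastic bound.
There is a universal constant `C` such that the following holds. Fix `δ ∈ (0,1]`.
If `(X_t,Y_t)_{t≥1}` satisfies the `d`-th order stochastic condition with parameter
`β* > 1/2`, and `α_{d-1,d} = (π*_{d-1} − π*_d)/2`, `α* = min {α_{d-1,d}, 2β*−1}`, then
ContextTreeAdaHedge(D) with the prior `g_prop(h) = 2^{-2^{h+1}}` satisfies, with
probability at least `1−δ`,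
`R_{T,d} ≤ C · 2^{2d} ((d²/α²_{d-1,d}) ln(d/(α²_{d-1,d} δ)) + (D·d/(α*)²) ln(D/(α* δ)))`. -/
theorem stochastic_regret_gprop :
    ∃ C : ℝ, 0 < C ∧
      ∀ (D d T : ℕ), 1 ≤ d → d ≤ D →
      ∀ δ : ℝ, 0 < δ → δ ≤ 1 →
      ∀ (Ω : Type) (_ : MeasurableSpace Ω) (μ : Measure Ω), IsProbabilityMeasure μ →
      ∀ (X : ℕ → Ω → Fin D → Bool) (Y : ℕ → Ω → Bool),
        -- the pairs (X_t, Y_t) are measurable and i.i.d. across t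
        (∀ t, Measurable fun ω => (X t ω, Y t ω)) →
        ProbabilityTheory.iIndepFun
          (fun t ω => (X t ω, Y t ω)) μ →
      ∀ (Q : (Fin D → Bool) → ℝ) (Pc : (Fin d → Bool) → Bool → ℝ),
        (∀ x, 0 ≤ Q x) → (∑ x : Fin D → Bool, Q x) = 1 →
        (∀ xd y, 0 ≤ Pc xd y) → (∀ xd : Fin d → Bool, (∑ y : Bool, Pc xd y) = 1) →
        -- X_t ~ Q, and Y_t | X_t ~ P*(· | X_t(d))
        (∀ (t : ℕ) (x : Fin D → Bool) (y : Bool),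
          μ {ω | X t ω = x ∧ Y t ω = y} = ENNReal.ofReal (Q x * Pc (trunc d x) y)) →
      -- the best predictor f* is unique, with β* = min_{x(d)} P*(f*(x(d)) | x(d)) > 1/2
      ∀ fstar : (Fin d → Bool) → Bool,
        (∀ (xd : Fin d → Bool) (y : Bool), y ≠ fstar xd → Pc xd y < Pc xd (fstar xd)) →
      ∀ bstar : ℝ, bstar = (⨅ xd : Fin d → Bool, Pc xd (fstar xd)) → 1 / 2 < bstar →
      -- for h < d the h-th order model is strictly less predictive: π*_h > π*_d
        (∀ h, h < d → pistar d Q Pc d < pistar d Q Pc h) →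
      ∀ αd αstar : ℝ,
        αd = (pistar d Q Pc (d - 1) - pistar d Q Pc d) / 2 →
        αstar = min αd (2 * bstar - 1) →
        ENNReal.ofReal (1 - δ) ≤
          μ {ω | regret gprop (fun s => X s ω) (fun s => Y s ω) d T ≤
              C * 2 ^ (2 * d) *
                (((d : ℝ) ^ 2 / αd ^ 2) * Real.log ((d : ℝ) / (αd ^ 2 * δ)) +
                  ((D : ℝ) * (d : ℝ) / αstar ^ 2) *
                    Real.log ((D : ℝ) / (αstar * δ)))} := by
  refine ⟨900, by norm_num, ?_⟩
  intro D d T hd hdD δ hδ hδ1 Ω _ μ _ X Y hmeas hindep Q Pc hQ _ hP hP1 hlaw fstar hfstar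
    bstar hbstar hbstar2 hpistar αd αstar hαd hαstar
  have hjoint (t : ℕ) : jointLaw μ (X t) (Y t) = fun x y => Q x * Pc (trunc d x) y := by
    funext x y
    rw [jointLaw, Measure.real, hlaw, ENNReal.toReal_ofReal (mul_nonneg (hQ x) (hP _ y))]
  have hlabel (t : ℕ) : LabelMargin (jointLaw μ (X t) (Y t)) fstar (2 * bstar - 1) :=
    hjoint t ▸ hbstar ▸ labelMargin_of_iInf hQ hP1
  have horder (t : ℕ) : OrderMargin (jointLaw μ (X t) (Y t)) fstar αd :=
    hjoint t ▸ hαd ▸ orderMargin_of_pistar hQ fun xd => (hfstar xd _ (by simp)).le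
  have hαd_pos : 0 < αd := by linarith [hpistar (d - 1) (by omega)]
  have hαd_le := (horder 0).le_quarter (jointLaw_nonneg _ _) (sum_jointLaw (hmeas 0))
  have hαstar_pos : 0 < αstar := hαstar ▸ lt_min hαd_pos (by linarith)
  have hαstar_le : αstar ≤ αd := hαstar ▸ min_le_left _ _
  refine (stochastic_regret_gprop_general hd hdD hmeas hindep
    (fun t => (hlabel t).mono (jointLaw_nonneg _ _) (hαstar ▸ min_le_right _ _))
    (fun t => (horder t).mono hαstar_le) hαstar_pos hδ hδ1 T).trans
    (measure_mono fun _ hω => le_trans (Set.mem_ofPred.1 hω) ?_)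
  exact log_rate_le_add_log_rate (by positivity) (by exact_mod_cast hd)
    (by exact_mod_cast hd.trans hdD) hαd_pos (by linarith) hαstar_pos (by linarith) hδ hδ1

end CTAH
end
end

section
/- (High-probability separation of lower-order models) Let ε ∈ (0,1] and suppose (X_t,Y_t)_{t≥1} satisfies the d-th order stochastic condition. Set α_{h,d} = (π*_h − π*_d)/2 and t_low(h) = (32d/α²_{h,d}) ( d·2^h ln 2 + ln(64d/(ε α²_{h,d})) ). Then with probability at least 1 − ε/2, simultaneously for every h < d and every t ≥ t_low(h), the estimated unpredictabilities satisfy (π̂_h(t) − π̂_d(t)) · t ≥ α_{h,d} · t. -/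
open Finset MeasureTheory

noncomputable section

namespace CTAH

variable {D : ℕ}

/-- Cumulative contextual loss `L_{x,t,y} = ∑_{s=1}^t 1[X_s(h) = x, Y_s ≠ y]`. -/
def Lctx (X : ℕ → Fin D → Bool) (Y : ℕ → Bool) (h : ℕ)
    (x : Fin h → Bool) (t : ℕ) (y : Bool) : ℝ :=
  ∑ s ∈ Finset.Icc 1 t, if trunc h (X s) = x ∧ Y s ≠ y then 1 else 0

/-- Appearance frequency `N_t(x) = ∑_{s=1}^{t-1} 1[X_s(h) = x]` of a sub-context. -/
def Nctx (X : ℕ → Fin D → Bool) (h t : ℕ) (x : Fin h → Bool) : ℕ :=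
  ∑ s ∈ Finset.Icc 1 (t - 1), if trunc h (X s) = x then 1 else 0

/-- The gap `D_t(h) = L_{X_t(h),t,1−Y*_t} − L_{X_t(h),t,Y*_t}` between the wrong and the
true predictor at round `t`, for the current length-`h` sub-context; `Ys` is the true
best prediction sequence `Y*`. -/
def Dgap (X : ℕ → Fin D → Bool) (Y : ℕ → Bool) (Ys : ℕ → Bool) (h t : ℕ) : ℝ :=
  Lctx X Y h (trunc h (X t)) t (!(Ys t)) - Lctx X Y h (trunc h (X t)) t (Ys t)

/-- Scaled estimated unpredictability `t · π̂_h(t) = ∑_{x(h)} min_y L_{x(h),t,y}`. -/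
def hatPiT (X : ℕ → Fin D → Bool) (Y : ℕ → Bool) (h t : ℕ) : ℝ :=
  ∑ x : Fin h → Bool, min (Lctx X Y h x t false) (Lctx X Y h x t true)

/-- Unnormalized posterior weight of model order `h`:
`Q_t(h; η, g) = g(h) ∏_{x(h)} (∑_y e^{−η L_{x(h),t,y}})`. -/
def Qmod (X : ℕ → Fin D → Bool) (Y : ℕ → Bool) (g : ℕ → ℝ) (η : ℝ) (t h : ℕ) : ℝ :=
  g h * ∏ x : Fin h → Bool, (∑ y : Bool, Real.exp (-η * Lctx X Y h x t y))

/-- Posterior probability `q_t(h; η, g) = Q_t(h)/∑_{h'=0}^D Q_t(h')` that the algorithm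
selects the `h`-th order model. -/
def qmod (D : ℕ) (X : ℕ → Fin D → Bool) (Y : ℕ → Bool) (g : ℕ → ℝ) (η : ℝ)
    (t h : ℕ) : ℝ :=
  Qmod X Y g η t h / ∑ h' ∈ Finset.range (D + 1), Qmod X Y g η t h'

/-- The probability `w^{(h)}_{t,1−Y*_t}(η) = e^{−η D_t(h)}/(1 + e^{−η D_t(h)})` with which
the uniform-prior `h`-th order algorithm predicts the wrong label `1 − Y*_t`. -/
def wbad (X : ℕ → Fin D → Bool) (Y : ℕ → Bool) (Ys : ℕ → Bool) (η : ℝ) (h t : ℕ) : ℝ :=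
  Real.exp (-η * Dgap X Y Ys h t) / (1 + Real.exp (-η * Dgap X Y Ys h t))


/-! The empirical and the expected zero-one losses of the best order-`h` predictor are `t · π̂_h(t)`
and `π*_h`. Fix an order-`d` predictor `g` of minimal risk. Any of the `2 ^ 2 ^ h` order-`h`
predictors has risk at least `π*_h = π*_d + 2α`, so by Hoeffding's inequality its cumulative loss
exceeds that of `g` by less than `αt` with probability at most `exp (-α² t / 2)`. On the complement
of these events `t · π̂_h(t) ≥ t · π̂_d(t) + αt`, because `g` costs at least `t · π̂_d(t)`. A union
bound over the predictors, over the times `t ≥ t_low(h)` (a geometric tail) and over the orders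
`h < d` costs at most `ε / 2` in total. -/

section ConcentrationTools

open ProbabilityTheory

variable {Ω : Type*} [MeasurableSpace Ω] {μ : Measure Ω}

lemma ofReal_one_sub_le_measure_forall_notMem [IsProbabilityMeasure μ] {ι : Type*}
    {s : Finset ι} {B : ι → Set Ω} {δ : ℝ} (hδ : 0 ≤ δ)
    (hB : ∀ i ∈ s, μ (B i) ≤ ENNReal.ofReal (δ / #s)) :
    ENNReal.ofReal (1 - δ) ≤ μ {ω | ∀ i ∈ s, ω ∉ B i} := by
  have measure_bad_le : μ (⋃ i ∈ s, B i) ≤ ENNReal.ofReal δ := calc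
    μ (⋃ i ∈ s, B i) ≤ ∑ i ∈ s, μ (B i) := measure_biUnion_finset_le s B
    _ ≤ ∑ _i ∈ s, ENNReal.ofReal (δ / #s) := sum_le_sum hB
    _ = ENNReal.ofReal (#s * (δ / #s)) := by
      rw [sum_const, nsmul_eq_mul, ENNReal.ofReal_mul (by positivity), ENNReal.ofReal_natCast]
    _ ≤ ENNReal.ofReal δ := by
      gcongr
      rw [mul_div_left_comm]
      exact mul_le_of_le_one_right hδ (div_self_le_one _)
  have good_eq : {ω | ∀ i ∈ s, ω ∉ B i} = (⋃ i ∈ s, B i)ᶜ := by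
    ext ω
    simp
  rw [ENNReal.ofReal_sub _ hδ, ENNReal.ofReal_one, tsub_le_iff_right, good_eq]
  calc (1 : ENNReal) = μ ((⋃ i ∈ s, B i)ᶜ ∪ ⋃ i ∈ s, B i) := by
        rw [Set.compl_union_self, measure_univ]
    _ ≤ μ (⋃ i ∈ s, B i)ᶜ + μ (⋃ i ∈ s, B i) := measure_union_le _ _
    _ ≤ μ (⋃ i ∈ s, B i)ᶜ + ENNReal.ofReal δ := by gcongr

lemma inv_one_sub_exp_neg_le {x : ℝ} (hx : 0 < x) : (1 - Real.exp (-x))⁻¹ ≤ 1 + x⁻¹ := by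
  have exp_neg_le : Real.exp (-x) ≤ (x + 1)⁻¹ := by
    rw [Real.exp_neg]
    exact inv_anti₀ (by positivity) (Real.add_one_le_exp x)
  calc (1 - Real.exp (-x))⁻¹ ≤ (x / (x + 1))⁻¹ := by
        refine inv_anti₀ (by positivity) ?_
        calc x / (x + 1) = 1 - (x + 1)⁻¹ := by field_simp; ring
          _ ≤ 1 - Real.exp (-x) := by gcongr
    _ = 1 + x⁻¹ := by field_simp

lemma tsum_ofReal_exp_neg_mul_le {C x : ℝ} (hC : 0 ≤ C) (hx : 0 < x) (T : ℕ) :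
    ∑' k : ℕ, ENNReal.ofReal (C * Real.exp (-x * (T + k : ℕ))) ≤
      ENNReal.ofReal (C * (1 + x⁻¹) * Real.exp (-x * T)) := by
  have term_eq (k : ℕ) : C * Real.exp (-x * (T + k : ℕ)) =
      C * Real.exp (-x * T) * Real.exp (-x) ^ k := by
    rw [← Real.exp_nat_mul, mul_assoc, ← Real.exp_add]
    push_cast
    ring_nf
  have geometric : HasSum (fun k : ℕ => C * Real.exp (-x * T) * Real.exp (-x) ^ k)
      (C * Real.exp (-x * T) * (1 - Real.exp (-x))⁻¹) :=
    (hasSum_geometric_of_lt_one (Real.exp_pos _).le (by simpa using hx)).mul_left _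
  simp_rw [term_eq]
  rw [← ENNReal.ofReal_tsum_of_nonneg (fun k => by positivity) geometric.summable,
    geometric.tsum_eq, mul_right_comm]
  gcongr
  exact inv_one_sub_exp_neg_le hx

lemma measure_exists_ge_mem_le {B : ℕ → Set Ω} {C x : ℝ} (hC : 0 ≤ C) (hx : 0 < x)
    (hB : ∀ t, μ (B t) ≤ ENNReal.ofReal (C * Real.exp (-x * t))) (τ : ℝ) :
    μ {ω | ∃ t : ℕ, τ ≤ t ∧ ω ∈ B t} ≤
      ENNReal.ofReal (C * (1 + x⁻¹) * Real.exp (-x * τ)) := by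
  have tail_subset : {ω | ∃ t : ℕ, τ ≤ t ∧ ω ∈ B t} ⊆ ⋃ k, B (⌈τ⌉₊ + k) := by
    rintro ω ⟨t, hτt, hω⟩
    obtain ⟨k, rfl⟩ := Nat.exists_eq_add_of_le (Nat.ceil_le.2 hτt)
    exact Set.mem_iUnion.2 ⟨k, hω⟩
  calc μ {ω | ∃ t : ℕ, τ ≤ t ∧ ω ∈ B t} ≤ ∑' k, μ (B (⌈τ⌉₊ + k)) :=
        (measure_mono tail_subset).trans (measure_iUnion_le _)
    _ ≤ ∑' k : ℕ, ENNReal.ofReal (C * Real.exp (-x * (⌈τ⌉₊ + k : ℕ))) :=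
        ENNReal.tsum_le_tsum fun k => hB _
    _ ≤ ENNReal.ofReal (C * (1 + x⁻¹) * Real.exp (-x * ⌈τ⌉₊)) :=
        tsum_ofReal_exp_neg_mul_le hC hx _
    _ ≤ ENNReal.ofReal (C * (1 + x⁻¹) * Real.exp (-x * τ)) := by
        gcongr ENNReal.ofReal (_ * Real.exp ?_)
        exact mul_le_mul_of_nonpos_left (Nat.le_ceil τ) (by linarith)

lemma measureReal_sum_le_sub_mul_card_le [IsProbabilityMeasure μ] {ι : Type*} {W : ι → Ω → ℝ}
    (hindep : iIndepFun W μ) {s : Finset ι} (hW : ∀ i ∈ s, AEMeasurable (W i) μ) {a b : ℝ}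
    (hbdd : ∀ i ∈ s, ∀ᵐ ω ∂μ, W i ω ∈ Set.Icc a b) {m δ : ℝ}
    (hm : ∀ i ∈ s, m ≤ ∫ ω, W i ω ∂μ) (hδ : 0 ≤ δ) :
    μ.real {ω | ∑ i ∈ s, W i ω ≤ (m - δ) * #s} ≤
      Real.exp (-(2 * δ ^ 2 / (b - a) ^ 2) * #s) := by
  let V : ι → Ω → ℝ := fun i => -(fun ω => W i ω - ∫ ω, W i ω ∂μ)
  have indep_V : iIndepFun V μ :=
    hindep.comp (fun i w => -(w - ∫ ω, W i ω ∂μ)) fun i => by fun_prop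
  have subgaussian_V (i : ι) (hi : i ∈ s) : HasSubgaussianMGF (V i) ((‖b - a‖₊ / 2) ^ 2) μ :=
    (hasSubgaussianMGF_of_mem_Icc (hW i hi) (hbdd i hi)).neg
  have exponent_eq :
      -(δ * #s) ^ 2 / (2 * ((∑ _i ∈ s, (‖b - a‖₊ / 2) ^ 2 : NNReal) : ℝ)) =
        -(2 * δ ^ 2 / (b - a) ^ 2) * #s := by
    simp only [sum_const, nsmul_eq_mul, NNReal.coe_mul, NNReal.coe_natCast, NNReal.coe_pow,
      NNReal.coe_div, coe_nnnorm, Real.norm_eq_abs, NNReal.coe_ofNat, div_pow, sq_abs]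
    rcases s.eq_empty_or_nonempty with rfl | hs
    · simp
    · have : (#s : ℝ) ≠ 0 := by exact_mod_cast hs.card_ne_zero
      field_simp
  rw [← exponent_eq]
  refine le_trans (measureReal_mono fun ω hω => ?_)
    (HasSubgaussianMGF.measure_sum_ge_le_of_iIndepFun indep_V subgaussian_V
      (by positivity : 0 ≤ δ * #s))
  have mean_le : #s * m ≤ ∑ i ∈ s, ∫ ω, W i ω ∂μ := by
    simpa using s.card_nsmul_le_sum _ m hm
  simp only [Set.mem_ofPred_eq, V, Pi.neg_apply, sum_neg_distrib, sum_sub_distrib] at hω ⊢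
  linarith

section FiniteClass

variable [IsProbabilityMeasure μ] {𝒵 : Type*} [MeasurableSpace 𝒵] {Z : ℕ → Ω → 𝒵}
  {G : 𝒵 → ℝ} {α : ℝ}

lemma measure_sum_sub_sum_lt_le (hindep : iIndepFun Z μ) (hZ : ∀ s, Measurable (Z s))
    {F : 𝒵 → ℝ} (hF : Measurable F) (hG : Measurable G)
    (hF01 : ∀ z, F z ∈ Set.Icc 0 1) (hG01 : ∀ z, G z ∈ Set.Icc 0 1) (hα : 0 ≤ α)
    (hgap : ∀ s, ∫ ω, G (Z s ω) ∂μ + 2 * α ≤ ∫ ω, F (Z s ω) ∂μ) (t : ℕ) :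
    μ {ω | ∑ s ∈ Icc 1 t, F (Z s ω) - ∑ s ∈ Icc 1 t, G (Z s ω) < α * t} ≤
      ENNReal.ofReal (Real.exp (-(α ^ 2 / 2) * t)) := by
  have integrable_comp {H : 𝒵 → ℝ} (hH : Measurable H) (hH01 : ∀ z, H z ∈ Set.Icc 0 1) (s : ℕ) :
      Integrable (fun ω => H (Z s ω)) μ :=
    .of_mem_Icc 0 1 (hH.comp (hZ s)).aemeasurable (ae_of_all _ fun _ => hH01 _)
  have mean_ge (s : ℕ) : 2 * α ≤ ∫ ω, (F (Z s ω) - G (Z s ω)) ∂μ := by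
    rw [integral_sub (integrable_comp hF hF01 s) (integrable_comp hG hG01 s)]
    linarith [hgap s]
  have hoeffding := measureReal_sum_le_sub_mul_card_le (s := Icc 1 t) (a := -1) (b := 1)
    (hindep.comp (fun _ z => F z - G z) fun _ => hF.sub hG)
    (fun s _ => ((hF.sub hG).comp (hZ s)).aemeasurable)
    (fun s _ => ae_of_all _ fun ω =>
      ⟨by dsimp; linarith [(hF01 (Z s ω)).1, (hG01 (Z s ω)).2],
        by dsimp; linarith [(hF01 (Z s ω)).2, (hG01 (Z s ω)).1]⟩)
    (fun s _ => mean_ge s) hα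
  have rate_eq : 2 * α ^ 2 / (1 - -1) ^ 2 = α ^ 2 / 2 := by ring
  rw [rate_eq, Nat.card_Icc, Nat.add_sub_cancel] at hoeffding
  refine (measure_mono fun ω hω => ?_).trans
    (ENNReal.le_ofReal_iff_toReal_le (measure_ne_top _ _) (Real.exp_pos _).le |>.2 hoeffding)
  simp only [Set.mem_ofPred_eq, Function.comp_apply, sum_sub_distrib] at hω ⊢
  linarith

lemma measure_exists_ge_exists_sum_sub_sum_lt_le {ι : Type*} [Fintype ι]
    (hindep : iIndepFun Z μ) (hZ : ∀ s, Measurable (Z s))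
    {F : ι → 𝒵 → ℝ} (hF : ∀ i, Measurable (F i)) (hG : Measurable G)
    (hF01 : ∀ i z, F i z ∈ Set.Icc 0 1) (hG01 : ∀ z, G z ∈ Set.Icc 0 1) (hα : 0 < α)
    (hgap : ∀ i s, ∫ ω, G (Z s ω) ∂μ + 2 * α ≤ ∫ ω, F i (Z s ω) ∂μ) (τ : ℝ) :
    μ {ω | ∃ t : ℕ, τ ≤ t ∧
        ∃ i, ∑ s ∈ Icc 1 t, F i (Z s ω) - ∑ s ∈ Icc 1 t, G (Z s ω) < α * t} ≤
      ENNReal.ofReal (Fintype.card ι * (1 + (α ^ 2 / 2)⁻¹) * Real.exp (-(α ^ 2 / 2) * τ)) := by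
  refine measure_exists_ge_mem_le
    (B := fun t : ℕ =>
      {ω | ∃ i, ∑ s ∈ Icc 1 t, F i (Z s ω) - ∑ s ∈ Icc 1 t, G (Z s ω) < α * t})
    (by positivity) (by positivity) (fun t => ?_) τ
  rw [Set.ofPred_exists]
  calc μ (⋃ i, {ω | ∑ s ∈ Icc 1 t, F i (Z s ω) - ∑ s ∈ Icc 1 t, G (Z s ω) < α * t})
      ≤ ∑ i, μ {ω | ∑ s ∈ Icc 1 t, F i (Z s ω) - ∑ s ∈ Icc 1 t, G (Z s ω) < α * t} :=
        measure_iUnion_fintype_le μ _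
    _ ≤ ∑ _i : ι, ENNReal.ofReal (Real.exp (-(α ^ 2 / 2) * t)) :=
        sum_le_sum fun i _ =>
          measure_sum_sub_sum_lt_le hindep hZ (hF i) hG (hF01 i) hG01 hα.le (hgap i) t
    _ = ENNReal.ofReal (Fintype.card ι * Real.exp (-(α ^ 2 / 2) * t)) := by
        rw [sum_const, card_univ, nsmul_eq_mul, ENNReal.ofReal_mul (by positivity),
          ENNReal.ofReal_natCast]

end FiniteClass

end ConcentrationTools

section BestPredictors

lemma isLeast_range_sum_apply {ι M : Type*} [Fintype ι] [AddCommMonoid M] [LinearOrder M]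
    [IsOrderedAddMonoid M] (F : ι → Bool → M) :
    IsLeast (Set.range fun f : ι → Bool => ∑ i, F i (f i))
      (∑ i, min (F i false) (F i true)) := by
  constructor
  · have attained (i : ι) : ∃ y, F i y = min (F i false) (F i true) := by
      rcases min_choice (F i false) (F i true) with hmin | hmin
      · exact ⟨false, hmin.symm⟩
      · exact ⟨true, hmin.symm⟩
    choose f hf using attained
    exact ⟨f, sum_congr rfl fun i _ => hf i⟩
  · rintro _ ⟨f, rfl⟩
    refine sum_le_sum fun i _ => ?_
    cases f i
    · exact min_le_left _ _
    · exact min_le_right _ _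

/-- The zero-one loss `1[y ≠ φ x]` of a predictor `φ` on a labelled context `(x, y)`. The order-`h`
predictors are those of the form `f ∘ trunc h`. -/
def zeroOneLoss {𝒳 : Type*} (φ : 𝒳 → Bool) (p : 𝒳 × Bool) : ℝ :=
  if p.2 ≠ φ p.1 then 1 else 0

lemma zeroOneLoss_mem_Icc {𝒳 : Type*} (φ : 𝒳 → Bool) (p : 𝒳 × Bool) :
    zeroOneLoss φ p ∈ Set.Icc 0 1 := by
  unfold zeroOneLoss
  split_ifs <;> simp

lemma sum_Lctx_apply {h : ℕ} (X : ℕ → Fin D → Bool) (Y : ℕ → Bool) (t : ℕ)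
    (f : (Fin h → Bool) → Bool) :
    ∑ x, Lctx X Y h x t (f x) = ∑ s ∈ Icc 1 t, zeroOneLoss (f ∘ trunc h) (X s, Y s) := by
  simp only [Lctx, zeroOneLoss, Function.comp_apply]
  rw [sum_comm]
  simp only [ite_and, sum_ite_eq, mem_univ, if_true]

lemma isLeast_hatPiT (X : ℕ → Fin D → Bool) (Y : ℕ → Bool) (h t : ℕ) :
    IsLeast (Set.range fun f : (Fin h → Bool) → Bool =>
      ∑ s ∈ Icc 1 t, zeroOneLoss (f ∘ trunc h) (X s, Y s)) (hatPiT X Y h t) := by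
  simp only [← sum_Lctx_apply]
  exact isLeast_range_sum_apply fun x y => Lctx X Y h x t y

/-- One round `(X, Y)` of the `d`-th order stochastic condition: the pair has joint probability mass
function `(x, y) ↦ Q x * P*(y | x(d))`, stated with real-valued probabilities. -/
structure HasModelLaw {Ω : Type*} [MeasurableSpace Ω] (d : ℕ) (Q : (Fin D → Bool) → ℝ)
    (Pc : (Fin d → Bool) → Bool → ℝ) (X : Ω → Fin D → Bool) (Y : Ω → Bool) (μ : Measure Ω) :
    Prop where
  measurable : Measurable fun ω => (X ω, Y ω)
  measureReal_eq : ∀ x y, μ.real {ω | X ω = x ∧ Y ω = y} = Q x * Pc (trunc d x) y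

variable {Ω : Type*} [MeasurableSpace Ω] {μ : Measure Ω} {d : ℕ}
  {Q : (Fin D → Bool) → ℝ} {Pc : (Fin d → Bool) → Bool → ℝ}

namespace HasModelLaw

variable {X : Ω → Fin D → Bool} {Y : Ω → Bool}

lemma integral_comp [IsFiniteMeasure μ] (hlaw : HasModelLaw d Q Pc X Y μ)
    (F : (Fin D → Bool) × Bool → ℝ) :
    ∫ ω, F (X ω, Y ω) ∂μ = ∑ x, ∑ y, Q x * Pc (trunc d x) y * F (x, y) := by
  rw [← integral_map hlaw.measurable.aemeasurable (measurable_of_finite F).aestronglyMeasurable,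
    integral_fintype .of_finite, Fintype.sum_prod_type]
  refine sum_congr rfl fun x _ => sum_congr rfl fun y _ => ?_
  have fiber_eq : (fun ω => (X ω, Y ω)) ⁻¹' {(x, y)} = {ω | X ω = x ∧ Y ω = y} := by
    ext ω
    simp
  rw [map_measureReal_apply hlaw.measurable (measurableSet_singleton _), fiber_eq,
    hlaw.measureReal_eq, smul_eq_mul]

lemma integral_zeroOneLoss_comp_trunc [IsFiniteMeasure μ] (hlaw : HasModelLaw d Q Pc X Y μ) {h : ℕ}
    (f : (Fin h → Bool) → Bool) :
    ∫ ω, zeroOneLoss (f ∘ trunc h) (X ω, Y ω) ∂μ = ∑ xh, jointP d Q Pc h xh (!f xh) := by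
  simp only [hlaw.integral_comp, jointP]
  rw [sum_comm (s := univ (α := Fin h → Bool))]
  refine sum_congr rfl fun x _ => ?_
  rw [sum_ite_eq, if_pos (mem_univ _)]
  cases hfx : f (trunc h x) <;> simp [zeroOneLoss, hfx]

lemma isLeast_pistar [IsFiniteMeasure μ] (hlaw : HasModelLaw d Q Pc X Y μ) (h : ℕ) :
    IsLeast (Set.range fun f : (Fin h → Bool) → Bool =>
      ∫ ω, zeroOneLoss (f ∘ trunc h) (X ω, Y ω) ∂μ) (pistar d Q Pc h) := by
  simp only [hlaw.integral_zeroOneLoss_comp_trunc, pistar, min_comm (jointP d Q Pc h _ false)]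
  exact isLeast_range_sum_apply fun xh y => jointP d Q Pc h xh !y

lemma pistar_mem_Icc [IsProbabilityMeasure μ] (hlaw : HasModelLaw d Q Pc X Y μ) (h : ℕ) :
    pistar d Q Pc h ∈ Set.Icc 0 1 := by
  obtain ⟨f, hf⟩ := (hlaw.isLeast_pistar h).1
  have loss_mem (ω : Ω) := zeroOneLoss_mem_Icc (f ∘ trunc h) (X ω, Y ω)
  rw [← hf]
  refine ⟨integral_nonneg fun ω => (loss_mem ω).1, ?_⟩
  have integrable_loss : Integrable (fun ω => zeroOneLoss (f ∘ trunc h) (X ω, Y ω)) μ :=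
    .of_mem_Icc 0 1
      ((measurable_of_finite (zeroOneLoss (f ∘ trunc h))).comp hlaw.measurable).aemeasurable
      (ae_of_all _ loss_mem)
  simpa using integral_mono integrable_loss (integrable_const 1) fun ω => (loss_mem ω).2

end HasModelLaw

lemma measure_exists_ge_hatPiT_sub_hatPiT_lt_le [IsProbabilityMeasure μ]
    {X : ℕ → Ω → Fin D → Bool} {Y : ℕ → Ω → Bool}
    (hindep : ProbabilityTheory.iIndepFun (fun s ω => (X s ω, Y s ω)) μ)
    (hlaw : ∀ s, HasModelLaw d Q Pc (X s) (Y s) μ) {h k : ℕ} {α : ℝ} (hα : 0 < α)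
    (hgap : pistar d Q Pc k + 2 * α ≤ pistar d Q Pc h) (τ : ℝ) :
    μ {ω | ∃ t : ℕ, τ ≤ t ∧
        hatPiT (fun s => X s ω) (fun s => Y s ω) h t -
          hatPiT (fun s => X s ω) (fun s => Y s ω) k t < α * t} ≤
      ENNReal.ofReal
        (2 ^ 2 ^ h * (1 + (α ^ 2 / 2)⁻¹) * Real.exp (-(α ^ 2 / 2) * τ)) := by
  obtain ⟨g, hg⟩ := ((hlaw 0).isLeast_pistar k).1
  have risk_g (s : ℕ) :
      ∫ ω, zeroOneLoss (g ∘ trunc k) (X s ω, Y s ω) ∂μ = pistar d Q Pc k := by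
    rw [← hg, (hlaw s).integral_zeroOneLoss_comp_trunc]
    exact ((hlaw 0).integral_zeroOneLoss_comp_trunc g).symm
  have union_bound := measure_exists_ge_exists_sum_sub_sum_lt_le hindep
    (fun s => (hlaw s).measurable)
    (F := fun (f : (Fin h → Bool) → Bool) => zeroOneLoss (f ∘ trunc h))
    (G := zeroOneLoss (g ∘ trunc k)) (fun _ => measurable_of_finite _) (measurable_of_finite _)
    (fun _ => zeroOneLoss_mem_Icc _) (zeroOneLoss_mem_Icc _) hα
    (fun f s => by
      rw [risk_g]
      exact hgap.trans (((hlaw s).isLeast_pistar h).2 ⟨f, rfl⟩)) τ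
  have card_predictors : (Fintype.card ((Fin h → Bool) → Bool) : ℝ) = 2 ^ 2 ^ h := by simp
  rw [card_predictors] at union_bound
  refine (measure_mono ?_).trans union_bound
  rintro ω ⟨t, hτt, hlt⟩
  obtain ⟨f, hf⟩ := (isLeast_hatPiT (fun s => X s ω) (fun s => Y s ω) h t).1
  have hatPiT_le := (isLeast_hatPiT (fun s => X s ω) (fun s => Y s ω) k t).2 ⟨g, rfl⟩
  refine ⟨t, hτt, f, ?_⟩
  dsimp only at hf hatPiT_le
  linarith

end BestPredictors

/-- The time `t_low(h)` after which the order-`h` model with half gap `α = α_{h,d}` is separated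
from the order-`d` model. -/
def separationTime (d h : ℕ) (ε α : ℝ) : ℝ :=
  32 * d / α ^ 2 * (d * 2 ^ h * Real.log 2 + Real.log (64 * d / (ε * α ^ 2)))

section SeparationTime

variable {d h : ℕ} {ε α : ℝ}

lemma le_half_sq_mul_separationTime (hd : 1 ≤ d) (hε0 : 0 < ε) (hε1 : ε ≤ 1)
    (hα0 : 0 < α) (hα1 : α ≤ 1) :
    2 ^ h * Real.log 2 + Real.log (64 * d / (ε * α ^ 2)) ≤ α ^ 2 / 2 * separationTime d h ε α := by
  have hd' : (1 : ℝ) ≤ d := by exact_mod_cast hd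
  have confidence_nonneg : 0 ≤ Real.log (64 * d / (ε * α ^ 2)) := by
    have : ε * α ^ 2 ≤ 1 := mul_le_one₀ hε1 (by positivity) (pow_le_one₀ hα0.le hα1)
    refine Real.log_nonneg ?_
    rw [one_le_div (by positivity)]
    linarith
  have class_nonneg : 0 ≤ 2 ^ h * Real.log 2 := by positivity
  calc 2 ^ h * Real.log 2 + Real.log (64 * d / (ε * α ^ 2))
      ≤ d * (2 ^ h * Real.log 2) + Real.log (64 * d / (ε * α ^ 2)) := by
        gcongr ?_ + _
        exact le_mul_of_one_le_left class_nonneg hd'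
    _ ≤ 16 * d * (d * (2 ^ h * Real.log 2) + Real.log (64 * d / (ε * α ^ 2))) :=
        le_mul_of_one_le_left (by positivity) (by linarith)
    _ = α ^ 2 / 2 * separationTime d h ε α := by
        rw [separationTime]
        field_simp
        ring

lemma two_pow_mul_exp_neg_separationTime_le (hd : 1 ≤ d) (hε0 : 0 < ε) (hε1 : ε ≤ 1)
    (hα0 : 0 < α) (hα1 : α ≤ 1) :
    2 ^ 2 ^ h * (1 + (α ^ 2 / 2)⁻¹) * Real.exp (-(α ^ 2 / 2) * separationTime d h ε α) ≤
      ε / 2 / d := by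
  have : (0 : ℝ) < d := by exact_mod_cast hd
  have exp_two_pow : Real.exp (2 ^ h * Real.log 2) = 2 ^ 2 ^ h := by
    rw [← Real.exp_log (by positivity : (0 : ℝ) < 2 ^ 2 ^ h), Real.log_pow]
    norm_cast
  have exp_le : Real.exp (-(α ^ 2 / 2) * separationTime d h ε α) ≤
      (2 ^ 2 ^ h)⁻¹ * (ε * α ^ 2 / (64 * d)) := calc
    _ ≤ Real.exp (-(2 ^ h * Real.log 2 + Real.log (64 * d / (ε * α ^ 2)))) := by
        rw [neg_mul]
        gcongr
        exact le_half_sq_mul_separationTime hd hε0 hε1 hα0 hα1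
    _ = (2 ^ 2 ^ h)⁻¹ * (ε * α ^ 2 / (64 * d)) := by
        rw [neg_add, Real.exp_add, Real.exp_neg, Real.exp_neg, exp_two_pow,
          Real.exp_log (by positivity), inv_div]
  have factor_le : 1 + (α ^ 2 / 2)⁻¹ ≤ 3 / α ^ 2 := by
    have : 1 ≤ 1 / α ^ 2 := (one_le_div (by positivity)).2 (pow_le_one₀ hα0.le hα1)
    calc 1 + (α ^ 2 / 2)⁻¹ ≤ 1 / α ^ 2 + (α ^ 2 / 2)⁻¹ := by gcongr
      _ = 3 / α ^ 2 := by field_simp; norm_num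
  calc _ ≤ 2 ^ 2 ^ h * (3 / α ^ 2) * ((2 ^ 2 ^ h)⁻¹ * (ε * α ^ 2 / (64 * d))) := by gcongr
    _ = 3 / 64 * ε / d := by field_simp
    _ ≤ ε / 2 / d := by gcongr; linarith

end SeparationTime

/-- High-probability separation of lower-order models.
Let `ε ∈ (0,1]` and suppose `(X_t,Y_t)_{t≥1}` satisfies the `d`-th order stochastic
condition. Set `α_{h,d} = (π*_h − π*_d)/2` and
`t_low(h) = (32d/α²_{h,d})(d·2^h ln 2 + ln(64d/(ε α²_{h,d})))`. Then with probability at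
least `1 − ε/2`, simultaneously for every `h < d` and every `t ≥ t_low(h)`,
`(π̂_h(t) − π̂_d(t)) · t ≥ α_{h,d} · t`. -/
theorem high_probability_lower_order_separation (D d : ℕ) (hd : d ≤ D)
    (ε : ℝ) (hε0 : 0 < ε) (hε1 : ε ≤ 1)
    (Ω : Type) [MeasurableSpace Ω] (μ : Measure Ω) [IsProbabilityMeasure μ]
    (X : ℕ → Ω → Fin D → Bool) (Y : ℕ → Ω → Bool)
    -- the pairs (X_t, Y_t) are measurable and i.i.d. across t
    (hmeas : ∀ t, Measurable fun ω => (X t ω, Y t ω))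
    (hindep : ProbabilityTheory.iIndepFun
      (fun t ω => (X t ω, Y t ω)) μ)
    (Q : (Fin D → Bool) → ℝ) (Pc : (Fin d → Bool) → Bool → ℝ)
    (hQ0 : ∀ x, 0 ≤ Q x) (hQ1 : (∑ x : Fin D → Bool, Q x) = 1)
    (hP0 : ∀ xd y, 0 ≤ Pc xd y) (hP1 : ∀ xd : Fin d → Bool, (∑ y : Bool, Pc xd y) = 1)
    -- X_t ~ Q, and Y_t | X_t ~ P*(· | X_t(d))
    (hlaw : ∀ (t : ℕ) (x : Fin D → Bool) (y : Bool),
      μ {ω | X t ω = x ∧ Y t ω = y} = ENNReal.ofReal (Q x * Pc (trunc d x) y))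
    -- for h < d the h-th order model is strictly less predictive: π*_h > π*_d
    (hsep : ∀ h, h < d → pistar d Q Pc d < pistar d Q Pc h)
    (αhd : ℕ → ℝ) (hαhd : ∀ h, αhd h = (pistar d Q Pc h - pistar d Q Pc d) / 2)
    (tlow : ℕ → ℝ)
    (htlow : ∀ h : ℕ, tlow h =
      (32 * (d : ℝ) / (αhd h) ^ 2) *
        ((d : ℝ) * 2 ^ h * Real.log 2 + Real.log (64 * (d : ℝ) / (ε * (αhd h) ^ 2)))) :
    ENNReal.ofReal (1 - ε / 2) ≤
      μ {ω | ∀ h t : ℕ, h < d → tlow h ≤ (t : ℝ) →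
          αhd h * (t : ℝ) ≤
            hatPiT (fun s => X s ω) (fun s => Y s ω) h t -
              hatPiT (fun s => X s ω) (fun s => Y s ω) d t} := by
  have hmodel (s : ℕ) : HasModelLaw d Q Pc (X s) (Y s) μ :=
    ⟨hmeas s, fun x y => by
      rw [measureReal_def, hlaw, ENNReal.toReal_ofReal (mul_nonneg (hQ0 x) (hP0 _ y))]⟩
  let separationFails (h : ℕ) : Set Ω := {ω | ∃ t : ℕ, tlow h ≤ t ∧
    hatPiT (fun s => X s ω) (fun s => Y s ω) h t -
      hatPiT (fun s => X s ω) (fun s => Y s ω) d t < αhd h * t}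
  have measure_fails_le : ∀ h ∈ range d,
      μ (separationFails h) ≤ ENNReal.ofReal (ε / 2 / #(range d)) := by
    intro h hh
    have hhd : h < d := mem_range.1 hh
    have hα0 : 0 < αhd h := by linarith [hαhd h, hsep h hhd]
    have hα1 : αhd h ≤ 1 := by
      linarith [hαhd h, ((hmodel 0).pistar_mem_Icc h).2, ((hmodel 0).pistar_mem_Icc d).1]
    have htime : tlow h = separationTime d h ε (αhd h) := htlow h
    rw [card_range]
    refine (measure_exists_ge_hatPiT_sub_hatPiT_lt_le hindep hmodel hα0
      (by linarith [hαhd h]) _).trans (ENNReal.ofReal_le_ofReal ?_)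
    rw [htime]
    exact two_pow_mul_exp_neg_separationTime_le (by lia) hε0 hε1 hα0 hα1
  refine (ofReal_one_sub_le_measure_forall_notMem (by positivity) measure_fails_le).trans
    (measure_mono fun ω hω h t hhd ht => ?_)
  exact not_lt.1 fun hlt => hω h (mem_range.2 hhd) ⟨t, ht, hlt⟩

end CTAH
end
end
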